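/- arXiv:1704.08481 — 9 statements merged into one kernel-verified Lean document; each statement's English description precedes it below -/
import Mathlib

section
/- Let F be a face of the standard n-cube, let φ be an outmap such that φ is a PUSO of F, and let R ⊆ {1,…,n}. Define the R-flipped outmap φ' by φ'(V) = φ(V) ∆ R for every subset V of {1,…,n}. Then φ' is a PUSO of F as well. -/
/-!
Since `R` is finite, it suffices to flip a single coordinate `r`. If `r` is not in the carrier of a
face, flipping `r` does not change its sinks. If `r` is in the carrier and both facets of the face
in direction `r` have a unique sink, then the sinks of the face are those of the two facet sinks
whose outmap value omits `r`, and after the flip they are those whose value contains `r`; exactly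
one of the two omits `r` iff exactly one contains `r` (`hasUniqueSink_flip_singleton`). Under a PUSO
of `F` all facets of faces contained in `F` have unique sinks, so flipping `r` changes, for no face
contained in `F`, whether its sink is unique.
-/

open Finset
open scoped symmDiff

/-- `V` is a sink of the face `[A,B]` of the standard cube (vertices are subsets
of `{1,…,n}`) under the outmap `φ`: `V` belongs to the face and `φ V` has no
coordinate in the carrier `B \ A`. -/
def IsSink (φ : Finset ℕ → Finset ℕ) (A B V : Finset ℕ) : Prop :=
  A ⊆ V ∧ V ⊆ B ∧ φ V ∩ (B \ A) = ∅

/-- The face `[A,B]` has exactly one sink under `φ`. -/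
def HasUniqueSink (φ : Finset ℕ → Finset ℕ) (A B : Finset ℕ) : Prop :=
  ∃! V, IsSink φ A B V

/-- `φ` is a USO of the face `[A,B]`: every face contained in `[A,B]`
(including `[A,B]` itself) has exactly one sink under `φ`. -/
def IsUSO (φ : Finset ℕ → Finset ℕ) (A B : Finset ℕ) : Prop :=
  A ⊆ B ∧ ∀ A' B' : Finset ℕ, A ⊆ A' → A' ⊆ B' → B' ⊆ B → HasUniqueSink φ A' B'

/-- `φ` is a PUSO of the face `[A,B]`: `[A,B]` does not have exactly one sink
under `φ`, but every proper face contained in `[A,B]` has exactly one sink. -/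
def IsPUSO (φ : Finset ℕ → Finset ℕ) (A B : Finset ℕ) : Prop :=
  A ⊆ B ∧ ¬ HasUniqueSink φ A B ∧
    ∀ A' B' : Finset ℕ, A ⊆ A' → A' ⊆ B' → B' ⊆ B → ¬(A' = A ∧ B' = B) →
      HasUniqueSink φ A' B'

/-- For a coordinate `r` of the carrier, a sink of `[A,B]` is a sink of one of the two facets in
direction `r` whose outmap value omits `r`. -/
lemma isSink_iff_facets {φ : Finset ℕ → Finset ℕ} {A B : Finset ℕ} {r : ℕ} (hr : r ∈ B \ A)
    (V : Finset ℕ) :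
    IsSink φ A B V ↔
      (IsSink φ (insert r A) B V ∨ IsSink φ A (B.erase r) V) ∧ r ∉ φ V := by
  simp only [IsSink, Finset.ext_iff, Finset.subset_iff, mem_inter, mem_sdiff, mem_insert,
    mem_erase, notMem_empty, iff_false] at *
  by_cases hV : r ∈ V <;> grind

lemma isSink_flip_of_notMem {φ : Finset ℕ → Finset ℕ} {A B : Finset ℕ} {r : ℕ} (hr : r ∉ B \ A)
    (V : Finset ℕ) :
    IsSink (fun V => φ V ∆ {r}) A B V ↔ IsSink φ A B V := by
  simp only [IsSink, Finset.ext_iff, mem_inter, mem_sdiff, mem_symmDiff, mem_singleton,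
    notMem_empty, iff_false] at *
  grind

/-- Flipping `r` does not affect whether the sink of `[A,B]` is unique, as long as the facets in
direction `r`, if there are any, have unique sinks. -/
lemma hasUniqueSink_flip_singleton {φ : Finset ℕ → Finset ℕ} {A B : Finset ℕ} {r : ℕ}
    (h : r ∈ B \ A → HasUniqueSink φ (insert r A) B ∧ HasUniqueSink φ A (B.erase r)) :
    HasUniqueSink (fun V => φ V ∆ {r}) A B ↔ HasUniqueSink φ A B := by
  by_cases hr : r ∈ B \ A
  · obtain ⟨⟨v₁, hv₁, hu₁⟩, ⟨v₀, hv₀, hu₀⟩⟩ := h hr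
    have hne : v₁ ≠ v₀ := by
      rintro rfl
      exact (mem_erase.1 (hv₀.2.1 (hv₁.1 (mem_insert_self r A)))).1 rfl
    have e₁ (V) : IsSink φ (insert r A) B V ↔ V = v₁ := ⟨hu₁ V, fun e => e ▸ hv₁⟩
    have e₀ (V) : IsSink φ A (B.erase r) V ↔ V = v₀ := ⟨hu₀ V, fun e => e ▸ hv₀⟩
    have h₁ : r ∉ B \ insert r A := by simp
    have h₀ : r ∉ B.erase r \ A := by simp
    have hflip (V) : r ∉ φ V ∆ {r} ↔ r ∈ φ V := by simp [mem_symmDiff]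
    simp only [HasUniqueSink, isSink_iff_facets hr, isSink_flip_of_notMem h₁,
      isSink_flip_of_notMem h₀, e₁, e₀, hflip, ExistsUnique]
    by_cases a₁ : r ∈ φ v₁ <;> by_cases a₀ : r ∈ φ v₀ <;> grind
  · simp only [HasUniqueSink, isSink_flip_of_notMem hr]

lemma isPUSO_flip_singleton {φ : Finset ℕ → Finset ℕ} {A B : Finset ℕ} (r : ℕ)
    (hφ : IsPUSO φ A B) : IsPUSO (fun V => φ V ∆ {r}) A B := by
  obtain ⟨hAB, hnot, hproper⟩ := hφ
  have key : ∀ A' B' : Finset ℕ, A ⊆ A' → A' ⊆ B' → B' ⊆ B →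
      (HasUniqueSink (fun V => φ V ∆ {r}) A' B' ↔ HasUniqueSink φ A' B') := by
    intro A' B' hA hAB' hB
    refine hasUniqueSink_flip_singleton fun hr => ?_
    obtain ⟨hrB, hrA⟩ := mem_sdiff.1 hr
    constructor
    · refine hproper _ _ (hA.trans (subset_insert r A')) (insert_subset hrB hAB') hB ?_
      rintro ⟨e, -⟩
      exact hrA (hA (e ▸ mem_insert_self r A'))
    · refine hproper _ _ hA (subset_erase.2 ⟨hAB', hrA⟩) ((erase_subset r B').trans hB) ?_
      rintro ⟨-, e⟩
      exact notMem_erase r B' (e ▸ hB hrB)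
  exact ⟨hAB, fun h => hnot ((key A B subset_rfl hAB subset_rfl).1 h),
    fun A' B' hA hAB' hB hne => (key A' B' hA hAB' hB).2 (hproper A' B' hA hAB' hB hne)⟩

/-- Flipping all coordinates in a set `R` preserves the PUSO property. -/
theorem puso_flip (n : ℕ) (φ : Finset ℕ → Finset ℕ) (A B R : Finset ℕ)
    (hB : B ⊆ Finset.Icc 1 n) (hR : R ⊆ Finset.Icc 1 n)
    (hφ : IsPUSO φ A B) :
    IsPUSO (fun V => φ V ∆ R) A B := by
  clear hR
  induction R using Finset.induction_on with
  | empty => simpa only [← Finset.bot_eq_empty, symmDiff_bot] using hφ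
  | insert r S hr ih =>
    have e : insert r S = S ∆ {r} := by
      ext x
      simp only [mem_insert, mem_symmDiff, mem_singleton]
      grind
    simpa only [e, symmDiff_assoc] using isPUSO_flip_singleton r ih
end

section
/- Let φ be an outmap on the standard n-cube (n ≥ 2) that is a PUSO of the full face [∅,{1,…,n}]. Then the number of sinks of the full face under φ, i.e. the number of vertices V ⊆ {1,…,n} with φ(V) ∩ {1,…,n} = ∅, is either 0 or exactly 2. -/
/-! Two vertices that agree in some coordinate lie in a common facet, and a sink of the
whole cube is a sink of every face containing it. Since each facet has only one sink, distinct
sinks of a PUSO differ in every coordinate (`sink_eq_compl`). A vertex has a single antipode,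
so there are at most two sinks; exactly one sink is excluded by definition. -/

open Finset
open scoped symmDiff

/-- Restriction of the carrier preserves sinks. -/
lemma isSink_of_global {φ : Finset ℕ → Finset ℕ} {I A B V : Finset ℕ}
    (hA : A ⊆ V) (hB : V ⊆ B) (hBI : B ⊆ I) (h : φ V ∩ I = ∅) : IsSink φ A B V := by
  refine ⟨hA, hB, Finset.subset_empty.mp ?_⟩
  rw [← h]
  exact Finset.inter_subset_inter_left (Finset.sdiff_subset.trans hBI)

/-- If every proper face of `[∅, I]` has a unique sink, distinct sinks of `[∅, I]` are
antipodal. -/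
lemma sink_eq_compl {φ : Finset ℕ → Finset ℕ} {I V W : Finset ℕ}
    (hprop : ∀ A' B' : Finset ℕ, ∅ ⊆ A' → A' ⊆ B' → B' ⊆ I → ¬(A' = ∅ ∧ B' = I) →
      HasUniqueSink φ A' B')
    (hV : V ⊆ I) (hW : W ⊆ I) (sV : φ V ∩ I = ∅) (sW : φ W ∩ I = ∅) (hne : V ≠ W) :
    W = I \ V := by
  ext i
  rw [Finset.mem_sdiff]
  constructor
  · refine fun hiW => ⟨hW hiW, fun hiV => hne ?_⟩
    -- Both vertices contain `i`, so they are sinks of the facet `[{i}, I]`.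
    have hi : ({i} : Finset ℕ) ⊆ I := by simpa using hW hiW
    exact (hprop {i} I (Finset.empty_subset _) hi subset_rfl (by simp)).unique
      (isSink_of_global (by simpa using hiV) hV subset_rfl sV)
      (isSink_of_global (by simpa using hiW) hW subset_rfl sW)
  · rintro ⟨hiI, hiV⟩
    by_contra hiW
    -- Both vertices avoid `i`, so they are sinks of the facet `[∅, I \ {i}]`.
    exact hne <| (hprop ∅ (I.erase i) subset_rfl (Finset.empty_subset _)
        (Finset.erase_subset _ _) (by simpa using hiI)).unique
      (isSink_of_global (Finset.empty_subset _) (Finset.subset_erase.mpr ⟨hV, hiV⟩)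
        (Finset.erase_subset _ _) sV)
      (isSink_of_global (Finset.empty_subset _) (Finset.subset_erase.mpr ⟨hW, hiW⟩)
        (Finset.erase_subset _ _) sW)

/-- A PUSO of the full face of the standard `n`-cube (`n ≥ 2`) has either no
sink or exactly two sinks. -/
theorem puso_zero_or_two_sinks (n : ℕ) (hn : 2 ≤ n)
    (φ : Finset ℕ → Finset ℕ) (hφ : IsPUSO φ ∅ (Finset.Icc 1 n)) :
    ((Finset.Icc 1 n).powerset.filter
        (fun V => φ V ∩ Finset.Icc 1 n = ∅)).card = 0 ∨
    ((Finset.Icc 1 n).powerset.filter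
        (fun V => φ V ∩ Finset.Icc 1 n = ∅)).card = 2 := by
  classical
  obtain ⟨-, hnu, hprop⟩ := hφ
  set S := (Finset.Icc 1 n).powerset.filter (fun V => φ V ∩ Finset.Icc 1 n = ∅) with hS
  have hmem : ∀ V, V ∈ S ↔ V ⊆ Finset.Icc 1 n ∧ φ V ∩ Finset.Icc 1 n = ∅ := fun V => by
    simp [hS]
  have hne_one : S.card ≠ 1 := by
    intro h
    obtain ⟨V, hV⟩ := Finset.card_eq_one.mp h
    refine hnu ⟨V, ?_, fun W hW => ?_⟩
    · have := (hmem V).mp (by simp [hV])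
      exact ⟨Finset.empty_subset _, this.1, by simpa using this.2⟩
    · have : W ∈ S := (hmem W).mpr ⟨hW.2.1, by simpa using hW.2.2⟩
      simpa [hV] using this
  have hle_two : S.card ≤ 2 := by
    by_contra! h
    obtain ⟨U, hU, V, hV, W, hW, hUV, hUW, hVW⟩ := Finset.two_lt_card.mp h
    rw [hmem] at hU hV hW
    -- `V` and `W` are both the antipode of `U`.
    exact hVW ((sink_eq_compl hprop hU.1 hV.1 hU.2 hV.2 hUV).trans
      (sink_eq_compl hprop hU.1 hW.1 hU.2 hW.2 hUW).symm)
  omega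
end

section
/- Let n ≥ 2 and let π be a permutation of {1,…,n} consisting of a single n-cycle (a cyclic permutation whose cycle has length n). Define the outmap φ by φ(V) = { i ∈ {1,…,n} : |V ∩ {i, π(i)}| = 1 } for all V ⊆ {1,…,n}. Then φ is a PUSO of the full face [∅,{1,…,n}] of the standard n-cube. -/
/-!
Since `π` moves every `i ∈ {1,…,n}`, the condition `|V ∩ {i, π i}| = 1` says that exactly one of
`i`, `π i` lies in `V`. Hence a vertex `V` of a face with carrier `C` is a sink iff membership in
`V` agrees at `i` and `π i` for every `i ∈ C` (`isSink_iff`).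

On the full cube both `∅` and `{1,…,n}` satisfy this, so the sink is not unique. For a proper face
`[A,B]`, the carrier `C = B \ A` misses a point of the cycle, so following `π` from any point one
eventually leaves `C` (`exists_iterate_notMem`). Let `r i` be the first point outside `C` on this
walk (`exists_exit_map`). Membership of `i` in a sink is forced to agree with that of `r i`, which
is prescribed by `A`; conversely this prescription does define a sink.
-/

open Finset
open scoped symmDiff

/-- Sinks of a face of the cube, when every coordinate of the carrier is moved by `π`: membership
is constant along each step `i ↦ π i` that starts in the carrier. -/
theorem isSink_iff (n : ℕ) (π : Equiv.Perm ℕ)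
    (hmoves : ∀ i : ℕ, π i ≠ i ↔ i ∈ Finset.Icc 1 n) (A B V : Finset ℕ)
    (hB : B ⊆ Finset.Icc 1 n) :
    IsSink (fun V => (Finset.Icc 1 n).filter (fun i => (V ∩ {i, π i}).card = 1)) A B V ↔
      A ⊆ V ∧ V ⊆ B ∧ ∀ i ∈ B \ A, (i ∈ V ↔ π i ∈ V) := by
  unfold IsSink
  refine and_congr_right fun _ => and_congr_right fun _ => ?_
  rw [Finset.eq_empty_iff_forall_notMem]
  have hcard : ∀ i ∈ Finset.Icc 1 n,
      ((V ∩ {i, π i}).card = 1 ↔ ¬ (i ∈ V ↔ π i ∈ V)) := by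
    intro i hi
    have hne : i ≠ π i := ((hmoves i).2 hi).symm
    by_cases h1 : i ∈ V <;> by_cases h2 : π i ∈ V <;>
      simp [Finset.inter_insert_of_mem, Finset.inter_insert_of_notMem,
        Finset.inter_singleton_of_mem, Finset.inter_singleton_of_notMem, h1, h2, hne]
  refine forall_congr' fun i => ?_
  by_cases hi : i ∈ B \ A
  · have hin : i ∈ Finset.Icc 1 n := hB (Finset.mem_sdiff.1 hi).1
    simp only [Finset.mem_inter, Finset.mem_filter, hin, hi, hcard i hin]
    tauto
  · simp only [Finset.mem_inter, hi]
    tauto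

/-- A cycle cannot stay forever in a finite set `C` that misses a point `j` of its support:
the points whose forward orbit stays in `C` form a finite forward-invariant set, hence one
invariant under `π⁻¹` too, and such a set would contain `j`. -/
theorem exists_iterate_notMem (π : Equiv.Perm ℕ) (hcyc : π.IsCycle) (C : Finset ℕ)
    (hC : ∀ i ∈ C, π i ≠ i) (j : ℕ) (hj : π j ≠ j) (hjC : j ∉ C) (i : ℕ) :
    ∃ k : ℕ, (π ^ k) i ∉ C := by
  by_contra! hcon
  let T : Set ℕ := {x | ∀ k : ℕ, (π ^ k) x ∈ C}
  have hTC : T ⊆ (C : Set ℕ) := fun x hx => hx 0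
  have hfin : Finite T := (C.finite_toSet.subset hTC).to_subtype
  have hmaps : Set.MapsTo π T T := by
    intro x hx k
    have := hx (k + 1)
    rwa [pow_succ, Equiv.Perm.mul_apply] at this
  have hinv : Set.MapsTo (π⁻¹ : Equiv.Perm ℕ) T T := Equiv.Perm.perm_symm_mapsTo_of_mapsTo π hmaps
  have hz : ∀ (z : ℤ), (π ^ z) i ∈ T := by
    intro z
    induction z with
    | zero => exact hcon
    | succ m ih =>
      rw [add_comm, zpow_add, zpow_one]
      exact hmaps ih
    | pred m ih =>
      rw [sub_eq_neg_add, zpow_add, zpow_neg_one]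
      exact hinv ih
  obtain ⟨z, hzj⟩ := hcyc.sameCycle (hC i (hcon 0)) hj
  exact hjC (hTC (hzj ▸ hz z))

/-- The exit map `r` of a set `C` that every forward orbit of `π` leaves: `r i` is the first point
outside `C` among `i, π i, π² i, …`. The last clause expresses that `r i` is reached from `i` by
steps of `π` starting in `C`. -/
theorem exists_exit_map (π : Equiv.Perm ℕ) (C : Finset ℕ)
    (h : ∀ i, ∃ k : ℕ, (π ^ k) i ∉ C) :
    ∃ r : ℕ → ℕ, (∀ i, r i ∉ C) ∧ (∀ i, i ∉ C → r i = i) ∧ (∀ i ∈ C, r i = r (π i)) ∧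
      ∀ V : Finset ℕ, (∀ i ∈ C, (i ∈ V ↔ π i ∈ V)) → ∀ i, (i ∈ V ↔ r i ∈ V) := by
  classical
  refine ⟨fun i => (π ^ Nat.find (h i)) i, fun i => Nat.find_spec (h i), ?_, ?_, ?_⟩
  · intro i hi
    have h0 : Nat.find (h i) = 0 := (Nat.find_eq_zero _).2 hi
    simp [h0]
  · intro i hi
    have hs : Nat.find (h i) = Nat.find (h (π i)) + 1 := by
      rw [Nat.find_eq_iff]
      refine ⟨?_, ?_⟩
      · rw [pow_succ, Equiv.Perm.mul_apply]
        exact Nat.find_spec (h (π i))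
      · rintro (_ | m) hm
        · simpa using hi
        · rw [pow_succ, Equiv.Perm.mul_apply]
          exact Nat.find_min (h (π i)) (by omega)
    simp only [hs, pow_succ, Equiv.Perm.mul_apply]
  · intro V hV i
    have hk : ∀ k ≤ Nat.find (h i), (i ∈ V ↔ (π ^ k) i ∈ V) := by
      intro k
      induction k with
      | zero => simp
      | succ k ih =>
        intro hle
        rw [ih (by omega), pow_succ', Equiv.Perm.mul_apply]
        exact hV _ (not_not.1 (Nat.find_min (h i) hle))
    exact hk _ le_rfl

/-- PUSO existence: if `π` is a permutation of `{1,…,n}` consisting of a single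
`n`-cycle (it is a cycle, and it moves exactly the elements of `{1,…,n}`), then
`φ(V) = {i ∈ {1,…,n} : |V ∩ {i, π i}| = 1}` defines a PUSO of the full face of
the standard `n`-cube. -/
theorem puso_existence (n : ℕ) (hn : 2 ≤ n) (π : Equiv.Perm ℕ)
    (hcyc : π.IsCycle) (hmoves : ∀ i : ℕ, π i ≠ i ↔ i ∈ Finset.Icc 1 n) :
    IsPUSO (fun V => (Finset.Icc 1 n).filter (fun i => (V ∩ {i, π i}).card = 1))
      ∅ (Finset.Icc 1 n) := by
  refine ⟨Finset.empty_subset _, ?_, ?_⟩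
  · rintro ⟨W, -, hW⟩
    have h1 := hW ∅ ((isSink_iff n π hmoves _ _ _ subset_rfl).2 (by simp))
    have h2 := hW (Finset.Icc 1 n) ((isSink_iff n π hmoves _ _ _ subset_rfl).2
      ⟨Finset.empty_subset _, subset_rfl, fun i hi => by
        have hi' : i ∈ Finset.Icc 1 n := (Finset.mem_sdiff.1 hi).1
        have hmv : π i ∈ Finset.Icc 1 n :=
          (hmoves _).1 fun he => (hmoves i).2 hi' (π.injective he)
        exact iff_of_true hi' hmv⟩)
    have hmem : (1 : ℕ) ∈ Finset.Icc 1 n := Finset.mem_Icc.2 ⟨le_rfl, by omega⟩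
    rw [h2, ← h1] at hmem
    simp at hmem
  · intro A B _ hAB hB hproper
    obtain ⟨j, hj, hjC⟩ : ∃ j ∈ Finset.Icc 1 n, j ∉ B \ A := by
      by_contra! hcon
      refine hproper ⟨Finset.eq_empty_of_forall_notMem fun a ha => ?_, ?_⟩
      · exact (Finset.mem_sdiff.1 (hcon a (hB (hAB ha)))).2 ha
      · exact hB.antisymm fun a ha => (Finset.mem_sdiff.1 (hcon a ha)).1
    obtain ⟨r, hrC, hr0, hr1, hrV⟩ := exists_exit_map π (B \ A)
      (exists_iterate_notMem π hcyc (B \ A)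
        (fun i hi => (hmoves i).2 (hB (Finset.mem_sdiff.1 hi).1)) j ((hmoves j).2 hj) hjC)
    -- On a vertex of the face, membership outside the carrier is dictated by `A`.
    have hout : ∀ V : Finset ℕ, A ⊆ V → V ⊆ B → ∀ i, i ∉ B \ A → (i ∈ V ↔ i ∈ A) := by
      intro V hAV hVB i hi
      refine ⟨fun hiV => ?_, fun hiA => hAV hiA⟩
      by_contra hiA
      exact hi (Finset.mem_sdiff.2 ⟨hVB hiV, hiA⟩)
    have hmemV : ∀ i, i ∈ B.filter (fun i => r i ∈ A) ↔ r i ∈ A := by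
      intro i
      rw [Finset.mem_filter, and_iff_right_iff_imp]
      intro hri
      by_contra hiB
      rw [hr0 i fun hi => hiB (Finset.mem_sdiff.1 hi).1] at hri
      exact hiB (hAB hri)
    refine ⟨B.filter (fun i => r i ∈ A), (isSink_iff n π hmoves _ _ _ hB).2
      ⟨fun i hi => ?_, Finset.filter_subset _ _, fun i hi => ?_⟩, fun W hW => ?_⟩
    · rw [hmemV, hr0 i fun h => (Finset.mem_sdiff.1 h).2 hi]
      exact hi
    · rw [hmemV, hmemV, hr1 i hi]
    · obtain ⟨hAW, hWB, hstep⟩ := (isSink_iff n π hmoves _ _ _ hB).1 hW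
      ext i
      rw [hmemV, hrV W hstep i, hout W hAW hWB _ (hrC i)]
end

section
/- Let φ be an outmap on the standard n-cube (n ≥ 2) that is a PUSO of the full face [∅,{1,…,n}]. Then the outmap values of all vertices have the same parity: for all vertices U, V ⊆ {1,…,n}, the cardinality |(φ(U) ∩ {1,…,n}) ∆ (φ(V) ∩ {1,…,n})| is even. -/
/-!
Let `X = {1,…,n}` and let `f T` be the number of vertices `V` with `φ V ∩ X = T`. For nonempty
`S ⊆ X`, the faces with carrier `X \ S` are proper and partition the cube into `2 ^ |S|` classes,
each containing exactly one vertex with `φ V ∩ X ⊆ S`. Hence `∑ T ⊆ S, f T = 2 ^ |S|` for all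
nonempty `S` (`sum_outCount`). This system determines `f` from its value at `∅`:
`f T = 1 + (-1) ^ |T| * (f ∅ - 1)` (`outCount_eq`). Since the whole cube does not have exactly one
sink, `f ∅ ≠ 1`, and as `f ≥ 0`, `f` vanishes on all sets of one of the two parities.
-/

open Finset
open scoped symmDiff

/-- The number of vertices `V ⊆ X` whose outmap value, restricted to `X`, is `T`. -/
def outCount (φ : Finset ℕ → Finset ℕ) (X T : Finset ℕ) : ℕ :=
  #{V ∈ X.powerset | φ V ∩ X = T}

/-- The sinks of the face `[A, A ∪ (X \ S)]`, whose carrier is `X \ S`. -/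
lemma isSink_face_iff {φ : Finset ℕ → Finset ℕ} {X S A V : Finset ℕ} (hS : S ⊆ X) (hA : A ⊆ S) :
    IsSink φ A (A ∪ X \ S) V ↔ V ⊆ X ∧ V ∩ S = A ∧ φ V ∩ X ⊆ S := by
  simp only [IsSink, Finset.ext_iff, Finset.subset_iff] at *
  simp only [mem_inter, mem_union, mem_sdiff, notMem_empty, iff_false] at *
  grind

lemma sum_outCount {φ : Finset ℕ → Finset ℕ} {X S : Finset ℕ} (hφ : IsPUSO φ ∅ X)
    (hS : S ⊆ X) (hne : S.Nonempty) :
    ∑ T ∈ S.powerset, outCount φ X T = 2 ^ #S := by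
  have hface : ∀ A ⊆ S, HasUniqueSink φ A (A ∪ X \ S) := by
    intro A hA
    refine hφ.2.2 A _ (empty_subset _) subset_union_left
      (union_subset (hA.trans hS) sdiff_subset) ?_
    rintro ⟨rfl, h⟩
    obtain ⟨x, hx⟩ := hne
    have := hS hx
    rw [← h] at this
    simp [hx] at this
  have hfib : ∑ T ∈ S.powerset, outCount φ X T = #{V ∈ X.powerset | φ V ∩ X ⊆ S} := by
    rw [Finset.card_eq_sum_card_fiberwise (f := fun V => φ V ∩ X) (t := S.powerset)]
    · refine Finset.sum_congr rfl fun T hT => ?_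
      rw [outCount, Finset.filter_filter]
      congr 1
      refine Finset.filter_congr fun V _ => ?_
      rw [mem_powerset] at hT
      exact ⟨fun h => ⟨h ▸ hT, h⟩, fun h => h.2⟩
    · intro V hV
      exact Finset.mem_coe.2 (mem_powerset.2 (Finset.mem_filter.1 hV).2)
  rw [hfib, ← card_powerset]
  -- The class of `V` in the partition into faces with carrier `X \ S` is recorded by `V ∩ S`.
  refine Finset.card_bij (fun V _ => V ∩ S) ?_ ?_ ?_
  · intro V _
    simp
  · intro V hV W hW h
    simp only [mem_filter, mem_powerset] at hV hW
    have hsub : V ∩ S ⊆ S := inter_subset_right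
    exact (hface _ hsub).unique ((isSink_face_iff hS hsub).2 ⟨hV.1, rfl, hV.2⟩)
      ((isSink_face_iff hS hsub).2 ⟨hW.1, h.symm, hW.2⟩)
  · intro A hA
    rw [mem_powerset] at hA
    obtain ⟨V, hV⟩ := (hface A hA).exists
    obtain ⟨h1, h2, h3⟩ := (isSink_face_iff hS hA).1 hV
    exact ⟨V, by simp [h1, h3], h2⟩

lemma outCount_eq {φ : Finset ℕ → Finset ℕ} {X : Finset ℕ} (hφ : IsPUSO φ ∅ X) (S : Finset ℕ)
    (hS : S ⊆ X) :
    (outCount φ X S : ℤ) = 1 + (-1) ^ #S * ((outCount φ X ∅ : ℤ) - 1) := by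
  induction S using Finset.strongInduction with
  | H S ih =>
    rcases S.eq_empty_or_nonempty with rfl | hne
    · simp
    · have h1 : ∑ T ∈ S.powerset, (outCount φ X T : ℤ) = 2 ^ #S := by
        exact_mod_cast sum_outCount hφ hS hne
      have h2 : ∑ T ∈ S.powerset, (1 + (-1) ^ #T * ((outCount φ X ∅ : ℤ) - 1)) = 2 ^ #S := by
        rw [Finset.sum_add_distrib, ← Finset.sum_mul,
          Finset.sum_powerset_neg_one_pow_card_of_nonempty hne]
        simp
      have h3 := h1.trans h2.symm
      -- By induction the two sums agree in every term other than the one for `S` itself.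
      rw [← Finset.add_sum_erase _ _ (mem_powerset_self S),
        ← Finset.add_sum_erase _ _ (mem_powerset_self S),
        Finset.sum_congr rfl (g := fun T => 1 + (-1) ^ #T * ((outCount φ X ∅ : ℤ) - 1))] at h3
      · exact add_right_cancel h3
      · intro T hT
        rw [mem_erase, mem_powerset] at hT
        exact ih T (hT.2.ssubset_of_ne hT.1) (hT.2.trans hS)

lemma outCount_empty_ne_one {φ : Finset ℕ → Finset ℕ} {X : Finset ℕ} (hφ : IsPUSO φ ∅ X) :
    outCount φ X ∅ ≠ 1 := by
  intro h
  obtain ⟨V, hV⟩ := Finset.card_eq_one.1 h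
  refine hφ.2.1 ⟨V, ?_, fun W hW => ?_⟩
  · have := hV ▸ mem_singleton_self V
    simpa [IsSink] using this
  · rw [← mem_singleton, ← hV]
    simpa [IsSink] using hW

lemma even_card_symmDiff {A B : Finset ℕ} (h : Even #A ↔ Even #B) : Even #(A ∆ B) := by
  have h1 : #(A ∆ B) = #(A \ B) + #(B \ A) :=
    Finset.card_union_of_disjoint disjoint_sdiff_sdiff
  have h2 := Finset.card_sdiff_add_card_inter A B
  have h3 := Finset.card_sdiff_add_card_inter B A
  rw [inter_comm] at h3
  rw [Nat.even_iff, Nat.even_iff] at h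
  rw [Nat.even_iff]
  omega

/-- PUSO parity: in a PUSO of the full face of the standard `n`-cube (`n ≥ 2`),
the outmap values of all vertices have the same parity. -/
theorem puso_parity (n : ℕ) (hn : 2 ≤ n)
    (φ : Finset ℕ → Finset ℕ) (hφ : IsPUSO φ ∅ (Finset.Icc 1 n)) :
    ∀ U V : Finset ℕ, U ⊆ Finset.Icc 1 n → V ⊆ Finset.Icc 1 n →
      Even ((φ U ∩ Finset.Icc 1 n) ∆ (φ V ∩ Finset.Icc 1 n)).card := by
  intro U V hU hV
  have hpos : ∀ W ⊆ Finset.Icc 1 n, 0 < outCount φ (Finset.Icc 1 n) (φ W ∩ Finset.Icc 1 n) :=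
    fun W hW => Finset.card_pos.2 ⟨W, by simp [hW]⟩
  have hc := outCount_empty_ne_one hφ
  have hUp := hpos U hU
  have hVp := hpos V hV
  have hUe := outCount_eq hφ _ (inter_subset_right (s₁ := φ U))
  have hVe := outCount_eq hφ _ (inter_subset_right (s₁ := φ V))
  apply even_card_symmDiff
  -- Values of both parities would give `0 < f ∅` and `0 < 2 - f ∅`, that is `f ∅ = 1`.
  rcases Nat.even_or_odd #(φ U ∩ Finset.Icc 1 n) with hu | hu <;>
    rcases Nat.even_or_odd #(φ V ∩ Finset.Icc 1 n) with hv | hv <;>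
    rw [hu.neg_one_pow] at hUe <;> rw [hv.neg_one_pow] at hVe
  · exact iff_of_true hu hv
  · omega
  · omega
  · exact iff_of_false (Nat.not_even_iff_odd.2 hu) (Nat.not_even_iff_odd.2 hv)
end

section
/- Let φ be an outmap on the standard n-cube. Then φ is a USO of the full face [∅,{1,…,n}] if and only if for every face [A,B] of dimension at least 1 there exists a pair of vertices U, V ∈ [A,B] that are antipodal in [A,B] and satisfy (φ(U) ∆ φ(V)) ∩ (U ∆ V) ≠ ∅. (This establishes correctness of a USO-recognition procedure that performs one antipodal pair evaluation per face, i.e. O(3^n) pair evaluations.) -/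
/-!
The argument rests on one invariance: flipping all edges of a fixed set `R` of coordinates,
i.e. replacing `φ` by `V ↦ φ V ∆ R`, does not change whether a face has a unique sink, provided
all its proper faces have one (`hasUniqueSink_flip`). For a single coordinate `i` of the carrier,
the sinks of the face are among the sinks `s₀`, `s₁` of its two `i`-facets; the face has a unique
sink iff exactly one of `i ∈ φ s₀`, `i ∈ φ s₁` holds, which is symmetric under the flip.

For a vertex `U`, flipping by `R = φ U` makes `U` a sink of every face containing it. In a USO the
flipped face has no further sink, so `φ A` and `φ B` differ on the carrier of `[A,B]`.
Conversely, in a minimal face without a unique sink, the flipped face has a second sink `W`;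
`U` and `W` lie in no common proper face, so `W` is the antipode of `U`. Hence every antipodal pair
of that face has equal outmaps on the carrier, contradicting the hypothesis.
-/

open Finset
open scoped symmDiff

/-- Every proper face of `[A,B]` has a unique sink. -/
def ProperUnique (φ : Finset ℕ → Finset ℕ) (A B : Finset ℕ) : Prop :=
  ∀ A' B' : Finset ℕ, A ⊆ A' → A' ⊆ B' → B' ⊆ B → ¬(A' = A ∧ B' = B) → HasUniqueSink φ A' B'

lemma isSink_iff_s6 (φ : Finset ℕ → Finset ℕ) (A B V : Finset ℕ) :
    IsSink φ A B V ↔ A ⊆ V ∧ V ⊆ B ∧ ∀ j ∈ B, j ∉ A → j ∉ φ V := by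
  unfold IsSink
  simp only [Finset.ext_iff, mem_inter, mem_sdiff, notMem_empty, iff_false]
  grind

lemma isSink_lower {φ : Finset ℕ → Finset ℕ} {A B V : Finset ℕ} {i : ℕ}
    (hV : i ∉ V) (h : IsSink φ A B V) : IsSink φ A (B.erase i) V := by
  rw [isSink_iff_s6] at *
  grind

lemma isSink_upper {φ : Finset ℕ → Finset ℕ} {A B V : Finset ℕ} {i : ℕ}
    (hV : i ∈ V) (h : IsSink φ A B V) : IsSink φ (insert i A) B V := by
  rw [isSink_iff_s6] at *
  grind

lemma ProperUnique.lower {φ : Finset ℕ → Finset ℕ} {A B : Finset ℕ} {i : ℕ}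
    (h : ProperUnique φ A B) (hAB : A ⊆ B) (hB : i ∈ B) (hA : i ∉ A) :
    HasUniqueSink φ A (B.erase i) :=
  h _ _ subset_rfl (by grind) (by grind) (by grind)

lemma ProperUnique.upper {φ : Finset ℕ → Finset ℕ} {A B : Finset ℕ} {i : ℕ}
    (h : ProperUnique φ A B) (hAB : A ⊆ B) (hB : i ∈ B) (hA : i ∉ A) :
    HasUniqueSink φ (insert i A) B :=
  h _ _ (by grind) (by grind) subset_rfl (by grind)

/-- Here `s` and `t` are the sinks of the two `i`-facets of `[A,B]`. They are the only candidates
for sinks of `[A,B]`, both before and after flipping coordinate `i`, and the direction of their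
`i`-edges decides. -/
lemma exists_facet_sinks {φ : Finset ℕ → Finset ℕ} {A B : Finset ℕ} {i : ℕ}
    (h : ProperUnique φ A B) (hAB : A ⊆ B) (hB : i ∈ B) (hA : i ∉ A) :
    ∃ s t : Finset ℕ, s ≠ t ∧ (∀ V, IsSink φ A B V ↔ (V = s ∨ V = t) ∧ i ∉ φ V) ∧
      (∀ V, IsSink (fun V => φ V ∆ {i}) A B V ↔ (V = s ∨ V = t) ∧ i ∈ φ V) := by
  obtain ⟨s, hs, hs'⟩ := h.lower hAB hB hA
  obtain ⟨t, ht, ht'⟩ := h.upper hAB hB hA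
  simp only [isSink_iff_s6] at hs ht hs' ht'
  refine ⟨s, t, by grind, fun V => ?_, fun V => ?_⟩
  all_goals
    simp only [isSink_iff_s6, mem_symmDiff, mem_singleton]
    constructor
    · intro hV
      by_cases hi : i ∈ V
      · have := ht' V (by grind)
        grind
      · have := hs' V (by grind)
        grind
    · grind

lemma hasUniqueSink_flip_one {φ : Finset ℕ → Finset ℕ} {A B : Finset ℕ} (i : ℕ)
    (h : ProperUnique φ A B) (hAB : A ⊆ B) :
    HasUniqueSink (fun V => φ V ∆ {i}) A B ↔ HasUniqueSink φ A B := by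
  by_cases hi : i ∈ B ∧ i ∉ A
  · obtain ⟨s, t, hst, h1, h2⟩ := exists_facet_sinks h hAB hi.1 hi.2
    unfold HasUniqueSink ExistsUnique
    simp only [h1, h2]
    by_cases hs : i ∈ φ s <;> by_cases ht : i ∈ φ t
    · exact ⟨fun ⟨x, hx, hu⟩ => absurd ((hu s (by grind)).trans (hu t (by grind)).symm) hst,
        by grind⟩
    · exact ⟨fun _ => ⟨t, by grind⟩, fun _ => ⟨s, by grind⟩⟩
    · exact ⟨fun _ => ⟨s, by grind⟩, fun _ => ⟨t, by grind⟩⟩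
    · exact ⟨by grind,
        fun ⟨x, hx, hu⟩ => absurd ((hu s (by grind)).trans (hu t (by grind)).symm) hst⟩
  · have : ∀ V, IsSink (fun V => φ V ∆ {i}) A B V ↔ IsSink φ A B V := by
      intro V
      simp only [isSink_iff_s6, mem_symmDiff, mem_singleton]
      grind
    simp only [HasUniqueSink, this]

/-- Flipping a fixed set of coordinates preserves the unique sink property of every face of
`[A,B]`, including `[A,B]` itself, whose own unique sink is not assumed. -/
lemma hasUniqueSink_flip {φ : Finset ℕ → Finset ℕ} {A B : Finset ℕ}
    (h : ProperUnique φ A B) (R : Finset ℕ) :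
    ∀ A' B' : Finset ℕ, A ⊆ A' → A' ⊆ B' → B' ⊆ B →
      (HasUniqueSink (fun V => φ V ∆ R) A' B' ↔ HasUniqueSink φ A' B') := by
  induction R using Finset.induction_on with
  | empty =>
    intro A' B' _ _ _
    have e : (fun V => φ V ∆ ∅) = φ := funext fun V => symmDiff_bot (φ V)
    rw [e]
  | insert i R hi ih =>
    intro A' B' h1 h2 h3
    have e : (fun V => φ V ∆ insert i R) = fun V => (φ V ∆ R) ∆ {i} := by
      funext V
      ext j
      simp only [mem_symmDiff, mem_singleton, mem_insert]
      grind
    rw [e, ← ih A' B' h1 h2 h3]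
    refine hasUniqueSink_flip_one (φ := fun V => φ V ∆ R) i ?_ h2
    intro A'' B'' g1 g2 g3 g4
    rw [ih A'' B'' (h1.trans g1) g2 (g3.trans h3)]
    refine h A'' B'' (h1.trans g1) g2 (g3.trans h3) ?_
    rintro ⟨rfl, rfl⟩
    exact g4 ⟨h1.antisymm g1 |>.symm ▸ rfl, g3.antisymm h3⟩

/-- In a minimal face without a unique sink, antipodal vertices have the same outmap on the
carrier. -/
lemma antipodal_eq {φ : Finset ℕ → Finset ℕ} {A B U V : Finset ℕ}
    (h : ProperUnique φ A B) (hn : ¬ HasUniqueSink φ A B) (hAU : A ⊆ U) (hUB : U ⊆ B)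
    (hUV : U ∆ V = B \ A) : (φ U ∆ φ V) ∩ (U ∆ V) = ∅ := by
  have hAB := hAU.trans hUB
  have flip := hasUniqueSink_flip h (φ U)
  have hU : IsSink (fun V => φ V ∆ φ U) A B U := ⟨hAU, hUB, by simp⟩
  obtain ⟨W, hW, hWU⟩ : ∃ W, IsSink (fun V => φ V ∆ φ U) A B W ∧ W ≠ U := by
    by_contra! hc
    exact hn ((flip A B subset_rfl hAB subset_rfl).1 ⟨U, hU, hc⟩)
  have hP : ProperUnique (fun V => φ V ∆ φ U) A B :=
    fun A' B' g1 g2 g3 g4 => (flip A' B' g1 g2 g3).2 (h A' B' g1 g2 g3 g4)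
  -- `U` and `W` disagree on the whole carrier: otherwise they are two sinks of a common facet.
  have hanti : ∀ i ∈ B, i ∉ A → (i ∈ U ↔ i ∉ W) := by
    intro i hB hA
    by_contra hc
    by_cases hiU : i ∈ U
    · have hiW : i ∈ W := by tauto
      exact hWU ((hP.upper hAB hB hA).unique (isSink_upper hiW hW) (isSink_upper hiU hU))
    · have hiW : i ∉ W := by tauto
      exact hWU ((hP.lower hAB hB hA).unique (isSink_lower hiW hW) (isSink_lower hiU hU))
  have hWV : W = V := by
    have hAW := hW.1
    have hWB := hW.2.1
    ext j
    have := Finset.ext_iff.1 hUV j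
    simp only [mem_symmDiff, mem_sdiff] at this
    grind
  rw [hUV, symmDiff_comm, ← hWV]
  exact hW.2.2

/-- Correctness of the `O(3^n)`-pair-evaluation USO recognition algorithm:
`φ` is a USO of the full face of the standard `n`-cube iff in every face of
dimension at least 1 some antipodal pair evaluation succeeds. -/
theorem uso_recognition (n : ℕ) (φ : Finset ℕ → Finset ℕ) :
    IsUSO φ ∅ (Finset.Icc 1 n) ↔
      ∀ A B : Finset ℕ, A ⊆ B → B ⊆ Finset.Icc 1 n → (B \ A).Nonempty →
        ∃ U V : Finset ℕ, A ⊆ U ∧ U ⊆ B ∧ A ⊆ V ∧ V ⊆ B ∧ U ∆ V = B \ A ∧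
          (φ U ∆ φ V) ∩ (U ∆ V) ≠ ∅ := by
  constructor
  · rintro ⟨-, h⟩ A B hAB hB hne
    have hd : A ∆ B = B \ A := symmDiff_of_le hAB
    refine ⟨A, B, subset_rfl, hAB, hAB, subset_rfl, hd, fun hc => ?_⟩
    have hP : ProperUnique φ A B :=
      fun A' B' _ g2 g3 _ => h A' B' (empty_subset _) g2 (g3.trans hB)
    have hu := (hasUniqueSink_flip hP (φ A) A B subset_rfl hAB subset_rfl).2
      (h A B (empty_subset _) hAB hB)
    rw [hd, symmDiff_comm] at hc
    have : A = B := hu.unique ⟨subset_rfl, hAB, by simp⟩ ⟨hAB, subset_rfl, hc⟩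
    simp [this] at hne
  · intro h
    refine ⟨empty_subset _, ?_⟩
    suffices H : ∀ k : ℕ, ∀ A B : Finset ℕ, A ⊆ B → B ⊆ Finset.Icc 1 n → #(B \ A) = k →
        HasUniqueSink φ A B from fun A B _ hAB hB => H _ A B hAB hB rfl
    intro k
    induction k using Nat.strong_induction_on with
    | _ k ih =>
    intro A B hAB hB hk
    by_cases hne : (B \ A).Nonempty
    · by_contra hn
      obtain ⟨U, V, hAU, hUB, -, -, hUV, hx⟩ := h A B hAB hB hne
      refine hx (antipodal_eq ?_ hn hAU hUB hUV)
      intro A' B' g1 g2 g3 g4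
      refine ih _ ?_ A' B' g2 (g3.trans hB) rfl
      rw [← hk]
      refine card_lt_card (Finset.ssubset_iff_subset_ne.2 ⟨sdiff_subset_sdiff g3 g1, fun e => g4 ?_⟩)
      have key : ∀ j, j ∈ B' ∧ j ∉ A' ↔ j ∈ B ∧ j ∉ A := fun j => by
        simpa using Finset.ext_iff.1 e j
      constructor <;> ext j <;> have := key j <;> grind
    · have hBA : B ⊆ A := by simpa [sdiff_eq_empty_iff_subset] using hne
      obtain rfl := hAB.antisymm hBA
      exact ⟨A, ⟨subset_rfl, subset_rfl, by simp⟩, fun W hW => hW.2.1.antisymm hW.1⟩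
end

section
/- For every n ≥ 2, puso(n) = 2·border(n−1), i.e. the number of outmaps on the standard n-cube (mapping subsets of {1,…,n} to subsets of {1,…,n}) that are PUSOs of the full face [∅,{1,…,n}] equals twice the number of outmaps on the standard (n−1)-cube that are border USOs of the full face [∅,{1,…,n−1}]. -/
/-!
Fix a PUSO `φ` of the cube on a ground set `S`. A face containing direction `i` splits into two
facets along `i`; if both have a unique sink, the face has a unique sink iff exactly one of the
two facet sinks has `i` outgoing. This criterion is invariant under complementing coordinate `i`
in every outmap value, so `V ↦ φ V ∆ T` is again a PUSO for every `T` (`IsPUSO.flip`).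

Consequently, for each value `T = φ U`, the PUSO `φ ∆ T` has `U` as a sink of the whole cube, hence
a second sink, and two sinks of the whole cube lie in no common facet: they are antipodal. Thus
`φ (S \ U) = φ U` (`IsPUSO.antipode`). The image of `φ` is therefore already attained on every
facet `[∅, S \ {i}]`, where `φ` followed by deletion of `i` is a bijection; so the image contains
exactly one of `T` and `T ∆ {i}` (`IsPUSO.im_iff_not_im`), and it consists of all sets of one
parity (`IsPUSO.im_iff`).

A PUSO of the `(m+1)`-cube is then determined by its restriction to the facet `[∅, {1,…,m}]` and
the parity of its image, and complementing coordinate `m+1` realizes both parities over each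
border USO. This is a bijection from PUSOs onto border USOs times `Bool`.
-/

open Finset
open scoped symmDiff

/-- `ψ` is a border USO of the full face of the standard `n`-cube: it is a USO
and there is an outmap `φ` on the standard `(n+1)`-cube that is a PUSO of the
full face and whose restriction to the facet `[∅, {1,…,n}]` agrees with `ψ`. -/
def IsBorderUSO (n : ℕ) (ψ : Finset ℕ → Finset ℕ) : Prop :=
  IsUSO ψ ∅ (Finset.Icc 1 n) ∧
    ∃ φ : Finset ℕ → Finset ℕ, IsPUSO φ ∅ (Finset.Icc 1 (n + 1)) ∧
      ∀ V : Finset ℕ, V ⊆ Finset.Icc 1 n → φ V ∩ Finset.Icc 1 n = ψ V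

/-- The set of outmaps of the standard `n`-cube (normalized: mapping subsets of
`{1,…,n}` to subsets of `{1,…,n}` and `∅` elsewhere) that are PUSOs of the full
face `[∅,{1,…,n}]`. -/
def PUSOOutmaps (n : ℕ) : Set (Finset ℕ → Finset ℕ) :=
  {φ | (∀ V : Finset ℕ, V ⊆ Finset.Icc 1 n → φ V ⊆ Finset.Icc 1 n) ∧
       (∀ V : Finset ℕ, ¬ V ⊆ Finset.Icc 1 n → φ V = ∅) ∧
       IsPUSO φ ∅ (Finset.Icc 1 n)}

/-- `puso n`: the number of outmaps of the standard `n`-cube that are PUSOs of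
the full face. -/
noncomputable def pusoCount (n : ℕ) : ℕ := (PUSOOutmaps n).ncard

/-- The set of outmaps of the standard `m`-cube (normalized: mapping subsets of
`{1,…,m}` to subsets of `{1,…,m}` and `∅` elsewhere) that are border USOs of
the full face `[∅,{1,…,m}]`. -/
def BorderOutmaps (m : ℕ) : Set (Finset ℕ → Finset ℕ) :=
  {ψ | (∀ V : Finset ℕ, V ⊆ Finset.Icc 1 m → ψ V ⊆ Finset.Icc 1 m) ∧
       (∀ V : Finset ℕ, ¬ V ⊆ Finset.Icc 1 m → ψ V = ∅) ∧
       IsBorderUSO m ψ}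

/-- `border m`: the number of outmaps of the standard `m`-cube that are border
USOs of the full face. -/
noncomputable def borderCount (m : ℕ) : ℕ := (BorderOutmaps m).ncard

/-! ### Dependence of sinks on the outmap -/

/-- Whether a face has a unique sink depends only on the outmap inside the carrier. -/
lemma HasUniqueSink.congr {φ φ' : Finset ℕ → Finset ℕ} {A B : Finset ℕ}
    (h : ∀ V, A ⊆ V → V ⊆ B → φ V ∩ (B \ A) = φ' V ∩ (B \ A)) :
    HasUniqueSink φ A B ↔ HasUniqueSink φ' A B := by
  have : ∀ V, IsSink φ A B V ↔ IsSink φ' A B V := by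
    intro V
    unfold IsSink
    constructor
    · rintro ⟨h1, h2, h3⟩
      exact ⟨h1, h2, by rw [← h V h1 h2, h3]⟩
    · rintro ⟨h1, h2, h3⟩
      exact ⟨h1, h2, by rw [h V h1 h2, h3]⟩
  simp only [HasUniqueSink, this]

lemma IsPUSO.congr {φ φ' : Finset ℕ → Finset ℕ} {S : Finset ℕ}
    (h : ∀ V, V ⊆ S → φ V ∩ S = φ' V ∩ S) (hφ : IsPUSO φ ∅ S) : IsPUSO φ' ∅ S := by
  have key : ∀ A B : Finset ℕ, B ⊆ S → (HasUniqueSink φ A B ↔ HasUniqueSink φ' A B) := by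
    intro A B hB
    apply HasUniqueSink.congr
    intro V _ hV
    have := h V (hV.trans hB)
    ext x
    have hx := Finset.ext_iff.1 this x
    have := @hB x
    simp only [Finset.mem_inter, Finset.mem_sdiff] at hx ⊢
    tauto
  refine ⟨hφ.1, fun hu => hφ.2.1 ((key _ _ subset_rfl).2 hu), ?_⟩
  intro A B h1 h2 h3 h4
  exact (key _ _ h3).1 (hφ.2.2 A B h1 h2 h3 h4)

/-! ### Complementing coordinates of a PUSO -/

/-- If both facets along `i` have unique sinks `v₀`, `v₁`, the sinks of the face are those of
`v₀`, `v₁` for which `i` is not outgoing. The facet sinks do not depend on coordinate `i` of the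
outmap, so the description holds simultaneously for all outmaps agreeing with `φ` off `i`. -/
lemma exists_facet_sinks_s10 {φ : Finset ℕ → Finset ℕ} {A B : Finset ℕ} {i : ℕ}
    (hiB : i ∈ B) (hiA : i ∉ A)
    (h0 : HasUniqueSink φ A (B.erase i)) (h1 : HasUniqueSink φ (insert i A) B) :
    ∃ v₀ v₁ : Finset ℕ, v₀ ≠ v₁ ∧ ∀ φ' : Finset ℕ → Finset ℕ,
      (∀ V j, j ≠ i → (j ∈ φ' V ↔ j ∈ φ V)) →
      ∀ V, IsSink φ' A B V ↔ (V = v₀ ∧ i ∉ φ' v₀) ∨ (V = v₁ ∧ i ∉ φ' v₁) := by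
  obtain ⟨v₀, ⟨a1, a2, a3⟩, a4⟩ := h0
  obtain ⟨v₁, ⟨b1, b2, b3⟩, b4⟩ := h1
  have hi0 : i ∉ v₀ := fun h => by simpa using a2 h
  have hi1 : i ∈ v₁ := b1 (Finset.mem_insert_self _ _)
  have mem_a3 : ∀ j, j ∈ φ v₀ → j ∈ B → j ≠ i → j ∈ A := by
    intro j h1 h2 h3
    by_contra h4
    apply Finset.notMem_empty j
    rw [← a3]
    simp [h1, h2, h4, h3]
  have mem_b3 : ∀ j, j ∈ φ v₁ → j ∈ B → j ≠ i → j ∈ A := by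
    intro j h1 h2 h3
    by_contra h4
    apply Finset.notMem_empty j
    rw [← b3]
    simp [h1, h2, h4, h3]
  refine ⟨v₀, v₁, fun h => hi0 (h ▸ hi1), ?_⟩
  intro φ' hφ' V
  constructor
  · rintro ⟨c1, c2, c3⟩
    have c3' : ∀ j, j ∈ φ' V → j ∈ B → j ∈ A := by
      intro j h1 h2
      by_contra h4
      apply Finset.notMem_empty j
      rw [← c3]
      simp [h1, h2, h4]
    have hiV : i ∉ φ' V := fun h => hiA (c3' i h hiB)
    by_cases hi : i ∈ V
    · right
      have : V = v₁ := by
        apply b4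
        refine ⟨Finset.insert_subset hi c1, c2, ?_⟩
        ext j
        have := c3' j
        have := hφ' V j
        simp only [Finset.mem_inter, Finset.mem_sdiff, Finset.mem_insert, Finset.notMem_empty]
        tauto
      exact ⟨this, this ▸ hiV⟩
    · left
      have : V = v₀ := by
        apply a4
        refine ⟨c1, Finset.subset_erase.2 ⟨c2, hi⟩, ?_⟩
        ext j
        have := c3' j
        have := hφ' V j
        simp only [Finset.mem_inter, Finset.mem_sdiff, Finset.mem_erase, Finset.notMem_empty]
        tauto
      exact ⟨this, this ▸ hiV⟩
  · rintro (⟨rfl, h⟩ | ⟨rfl, h⟩)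
    · refine ⟨a1, a2.trans (Finset.erase_subset _ _), ?_⟩
      ext j
      have := mem_a3 j
      have := hφ' V j
      simp only [Finset.mem_inter, Finset.mem_sdiff, Finset.notMem_empty]
      by_cases hj : j = i
      · subst hj; tauto
      · tauto
    · refine ⟨(Finset.subset_insert _ _).trans b1, b2, ?_⟩
      ext j
      have := mem_b3 j
      have := hφ' V j
      simp only [Finset.mem_inter, Finset.mem_sdiff, Finset.notMem_empty]
      by_cases hj : j = i
      · subst hj; tauto
      · tauto

/-- Complementing coordinate `i` of the outmap exchanges the roles of the two facet sinks. -/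
lemma hasUniqueSink_flip_iff {φ : Finset ℕ → Finset ℕ} {A B : Finset ℕ} {i : ℕ}
    (hiB : i ∈ B) (hiA : i ∉ A)
    (h0 : HasUniqueSink φ A (B.erase i)) (h1 : HasUniqueSink φ (insert i A) B) :
    HasUniqueSink (fun V => φ V ∆ {i}) A B ↔ HasUniqueSink φ A B := by
  obtain ⟨v₀, v₁, hne, H⟩ := exists_facet_sinks_s10 hiB hiA h0 h1
  have two_cases : ∀ p q : Prop,
      (∃! V, (V = v₀ ∧ ¬ p) ∨ (V = v₁ ∧ ¬ q)) ↔ ((p ∧ ¬ q) ∨ (¬ p ∧ q)) := by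
    intro p q
    by_cases hp : p <;> by_cases hq : q <;> simp only [hp, hq, not_true, not_false_iff,
      and_true, and_false, or_false, false_or, or_true, iff_true, iff_false]
    · rintro ⟨_, h, _⟩; exact h
    · exact ⟨v₁, rfl, fun _ h => h⟩
    · exact ⟨v₀, rfl, fun _ h => h⟩
    · rintro ⟨w, _, h⟩
      exact hne ((h v₀ (Or.inl rfl)).trans (h v₁ (Or.inr rfl)).symm)
  have flip_off : ∀ V j, j ≠ i → (j ∈ φ V ∆ {i} ↔ j ∈ φ V) := by
    intro V j hj
    simp [Finset.mem_symmDiff, hj]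
  have flip_at : ∀ V, i ∈ φ V ∆ {i} ↔ i ∉ φ V := by
    intro V
    simp [Finset.mem_symmDiff]
  unfold HasUniqueSink
  simp only [H φ (fun _ _ _ => Iff.rfl), H (fun V => φ V ∆ {i}) flip_off]
  rw [two_cases, two_cases, flip_at, flip_at]
  tauto

lemma IsPUSO.flip_singleton {φ : Finset ℕ → Finset ℕ} {S : Finset ℕ}
    (hφ : IsPUSO φ ∅ S) {i : ℕ} (hi : i ∈ S) : IsPUSO (fun V => φ V ∆ {i}) ∅ S := by
  have key : ∀ A B : Finset ℕ, A ⊆ B → B ⊆ S →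
      i ∈ B → i ∉ A → (HasUniqueSink (fun V => φ V ∆ {i}) A B ↔ HasUniqueSink φ A B) := by
    intro A B hAB hBS hiB hiA
    apply hasUniqueSink_flip_iff hiB hiA
    · apply hφ.2.2 _ _ (Finset.empty_subset _) (Finset.subset_erase.2 ⟨hAB, hiA⟩)
        ((Finset.erase_subset _ _).trans hBS)
      rintro ⟨_, h⟩
      rw [← h] at hi
      simp at hi
    · apply hφ.2.2 _ _ (Finset.empty_subset _) (Finset.insert_subset hiB hAB) hBS
      rintro ⟨h, _⟩
      simp at h
  refine ⟨hφ.1, fun h => hφ.2.1 ((key _ _ hφ.1 subset_rfl hi (by simp)).1 h), ?_⟩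
  intro A B h1 h2 h3 h4
  by_cases hc : i ∈ B ∧ i ∉ A
  · exact (key A B h2 h3 hc.1 hc.2).2 (hφ.2.2 A B h1 h2 h3 h4)
  · refine (HasUniqueSink.congr ?_).1 (hφ.2.2 A B h1 h2 h3 h4)
    intro V _ _
    ext j
    simp only [Finset.mem_inter, Finset.mem_sdiff, Finset.mem_symmDiff, Finset.mem_singleton]
    by_cases hj : j = i
    · subst hj; tauto
    · tauto

lemma IsPUSO.flip {φ : Finset ℕ → Finset ℕ} {S T : Finset ℕ}
    (hφ : IsPUSO φ ∅ S) (hT : T ⊆ S) : IsPUSO (fun V => φ V ∆ T) ∅ S := by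
  induction T using Finset.induction_on with
  | empty => simpa [← Finset.bot_eq_empty] using hφ
  | insert i T hi ih =>
    have h := (ih ((Finset.subset_insert _ _).trans hT)).flip_singleton
      (hT (Finset.mem_insert_self i T))
    convert h using 2 with V
    ext j
    simp only [Finset.mem_symmDiff, Finset.mem_insert, Finset.mem_singleton]
    by_cases hj : j = i
    · subst hj; tauto
    · tauto

/-! ### Antipodal vertices -/

/-- On a proper face of a PUSO, the outmap restricted to the carrier is injective. -/
lemma IsPUSO.eq_of_face {φ : Finset ℕ → Finset ℕ} {S A B U V : Finset ℕ}
    (hφ : IsPUSO φ ∅ S) (hN : ∀ V ⊆ S, φ V ⊆ S) (hBS : B ⊆ S) (hne : ¬(A = ∅ ∧ B = S))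
    (hAU : A ⊆ U) (hUB : U ⊆ B) (hAV : A ⊆ V) (hVB : V ⊆ B)
    (h : ∀ j ∈ B, j ∉ A → (j ∈ φ U ↔ j ∈ φ V)) : U = V := by
  have hf := (hφ.flip (hN U (hUB.trans hBS))).2.2 A B (Finset.empty_subset _) (hAU.trans hUB)
    hBS hne
  refine hf.unique ⟨hAU, hUB, ?_⟩ ⟨hAV, hVB, ?_⟩
  · simp
  · ext j
    have := h j
    simp only [Finset.mem_inter, Finset.mem_sdiff, Finset.mem_symmDiff, Finset.notMem_empty]
    tauto

/-- Antipodal vertices of a PUSO have the same outmap value. -/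
lemma IsPUSO.antipode {φ : Finset ℕ → Finset ℕ} {S U : Finset ℕ}
    (hφ : IsPUSO φ ∅ S) (hN : ∀ V ⊆ S, φ V ⊆ S) (hU : U ⊆ S) : φ (S \ U) = φ U := by
  have hex : ∃ V ⊆ S, φ V = φ U ∧ V ≠ U := by
    by_contra hcon
    push Not at hcon
    apply (hφ.flip (hN U hU)).2.1
    refine ⟨U, ⟨Finset.empty_subset _, hU, by simp⟩, ?_⟩
    rintro V ⟨_, hV, h⟩
    apply hcon V hV
    ext j
    have h1 := Finset.ext_iff.1 h j
    have h2 := @hN U hU j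
    have h3 := @hN V hV j
    simp only [Finset.mem_inter, Finset.mem_sdiff, Finset.mem_symmDiff,
      Finset.notMem_empty] at h1
    tauto
  obtain ⟨V, hV, hVU, hne⟩ := hex
  have : S \ U = V := by
    ext i
    by_cases hi : i ∈ S
    · -- Two vertices with equal value cannot share a facet along `i`.
      have h1 : ¬ (i ∈ U ∧ i ∈ V) := by
        rintro ⟨h1, h2⟩
        exact hne (hφ.eq_of_face (A := {i}) (B := S) hN subset_rfl (by simp) (by simpa)
          hV (by simpa) hU (by simp [hVU]))
      have h2 : ¬ (i ∉ U ∧ i ∉ V) := by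
        rintro ⟨h1, h2⟩
        exact hne (hφ.eq_of_face (A := ∅) (B := S.erase i) hN (Finset.erase_subset _ _)
          (by simpa using hi) (by simp) (Finset.subset_erase.2 ⟨hV, h2⟩) (by simp)
          (Finset.subset_erase.2 ⟨hU, h1⟩) (by simp [hVU]))
      simp only [Finset.mem_sdiff]
      tauto
    · have := @hV i
      simp only [Finset.mem_sdiff]
      tauto
  rw [this, hVU]

/-! ### Parity of the image -/

/-- `T` is a value of the outmap `φ` on the cube over `S`. -/
def InImage (φ : Finset ℕ → Finset ℕ) (S T : Finset ℕ) : Prop := ∃ V ⊆ S, φ V = T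

lemma InImage.exists_notMem {φ : Finset ℕ → Finset ℕ} {S T : Finset ℕ}
    (hφ : IsPUSO φ ∅ S) (hN : ∀ V ⊆ S, φ V ⊆ S) (h : InImage φ S T) (i : ℕ) :
    ∃ V ⊆ S, i ∉ V ∧ φ V = T := by
  obtain ⟨V, hV, rfl⟩ := h
  by_cases hi : i ∈ V
  · exact ⟨S \ V, Finset.sdiff_subset, by simp [hi], hφ.antipode hN hV⟩
  · exact ⟨V, hV, hi, rfl⟩

lemma IsPUSO.im_iff_not_im {φ : Finset ℕ → Finset ℕ} {S T : Finset ℕ} {i : ℕ}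
    (hφ : IsPUSO φ ∅ S) (hN : ∀ V ⊆ S, φ V ⊆ S) (hi : i ∈ S) (hT : T ⊆ S) :
    InImage φ S (T ∆ {i}) ↔ ¬ InImage φ S T := by
  have hface : ¬((∅ : Finset ℕ) = ∅ ∧ S.erase i = S) := by simpa using hi
  constructor
  · intro h1 h2
    obtain ⟨U, hU, hiU, hUT⟩ := h1.exists_notMem hφ hN i
    obtain ⟨V, hV, hiV, hVT⟩ := h2.exists_notMem hφ hN i
    have : U = V := by
      apply hφ.eq_of_face hN (Finset.erase_subset i S) hface (by simp)
        (Finset.subset_erase.2 ⟨hU, hiU⟩) (by simp) (Finset.subset_erase.2 ⟨hV, hiV⟩)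
      intro j hj _
      rw [hUT, hVT]
      simp [Finset.mem_symmDiff, Finset.ne_of_mem_erase hj]
    rw [this, hVT] at hUT
    have := Finset.ext_iff.1 hUT i
    simp [Finset.mem_symmDiff] at this
  · intro h
    obtain ⟨V, ⟨_, hV, hs⟩, _⟩ := (hφ.flip hT).2.2 ∅ (S.erase i) subset_rfl (by simp)
      (Finset.erase_subset _ _) hface
    have hVS := hV.trans (Finset.erase_subset _ _)
    have off : ∀ j, j ≠ i → (j ∈ φ V ↔ j ∈ T) := by
      intro j hj
      have h1 := Finset.ext_iff.1 hs j
      have h2 := @hN V hVS j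
      have h3 := @hT j
      simp only [Finset.mem_inter, Finset.mem_sdiff, Finset.mem_symmDiff, Finset.mem_erase,
        Finset.notMem_empty] at h1
      tauto
    have hat : ¬ (i ∈ φ V ↔ i ∈ T) := by
      intro hc
      apply h
      refine ⟨V, hVS, ?_⟩
      ext j
      by_cases hj : j = i
      · subst hj; exact hc
      · exact off j hj
    refine ⟨V, hVS, ?_⟩
    ext j
    simp only [Finset.mem_symmDiff, Finset.mem_singleton]
    by_cases hj : j = i
    · subst hj; tauto
    · have := off j hj
      tauto

/-- The image of a PUSO consists of all subsets of `S` of one parity. -/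
lemma IsPUSO.im_iff {φ : Finset ℕ → Finset ℕ} {S T : Finset ℕ}
    (hφ : IsPUSO φ ∅ S) (hN : ∀ V ⊆ S, φ V ⊆ S) (hT : T ⊆ S) :
    InImage φ S T ↔ (InImage φ S ∅ ↔ Even T.card) := by
  induction T using Finset.induction_on with
  | empty => simp
  | insert i T hi ih =>
    have hTS := (Finset.subset_insert _ _).trans hT
    have h := hφ.im_iff_not_im hN (hT (Finset.mem_insert_self i T)) hTS
    have heq : T ∆ {i} = insert i T := by
      ext j
      simp only [Finset.mem_symmDiff, Finset.mem_insert, Finset.mem_singleton]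
      by_cases hj : j = i
      · subst hj; tauto
      · tauto
    rw [heq] at h
    rw [h, ih hTS, Finset.card_insert_of_notMem hi, Nat.even_add_one]
    tauto

/-! ### Restriction to a facet and extension of border USOs -/

/-- The restriction of an outmap to the facet `[∅, {1,…,m}]`, normalized to be `∅` off it. -/
def restrictFacet (m : ℕ) (φ : Finset ℕ → Finset ℕ) (V : Finset ℕ) : Finset ℕ :=
  if V ⊆ Finset.Icc 1 m then φ V ∩ Finset.Icc 1 m else ∅

/-- The normalization of an outmap on the cube over `S`: values are cut down to `S`, and set to
`∅` off the cube. -/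
def normalizeOn (S : Finset ℕ) (φ : Finset ℕ → Finset ℕ) (V : Finset ℕ) : Finset ℕ :=
  if V ⊆ S then φ V ∩ S else ∅

lemma normalizeOn_mem {φ : Finset ℕ → Finset ℕ} {n : ℕ} (hφ : IsPUSO φ ∅ (Finset.Icc 1 n)) :
    normalizeOn (Finset.Icc 1 n) φ ∈ PUSOOutmaps n := by
  refine ⟨fun V hV => ?_, fun V hV => ?_, hφ.congr fun V hV => ?_⟩
  · simp [normalizeOn, hV]
  · simp [normalizeOn, hV]
  · simp [normalizeOn, hV]

lemma Icc_subset_succ (m : ℕ) : Finset.Icc 1 m ⊆ Finset.Icc 1 (m + 1) :=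
  Finset.Icc_subset_Icc_right (Nat.le_succ m)

lemma restrictFacet_mem {φ : Finset ℕ → Finset ℕ} {m : ℕ} (hφ : φ ∈ PUSOOutmaps (m + 1)) :
    restrictFacet m φ ∈ BorderOutmaps m := by
  refine ⟨fun V hV => ?_, fun V hV => ?_, ⟨by simp, ?_⟩, φ, hφ.2.2, fun V hV => ?_⟩
  · simp [restrictFacet, hV]
  · simp [restrictFacet, hV]
  · intro A B h1 h2 h3
    refine (HasUniqueSink.congr ?_).1
      (hφ.2.2.2.2 A B h1 h2 (h3.trans (Icc_subset_succ m)) ?_)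
    · intro V _ hV
      ext j
      have := @h3 j
      simp only [restrictFacet, hV.trans h3, if_true, Finset.mem_inter, Finset.mem_sdiff]
      tauto
    · rintro ⟨_, rfl⟩
      have := h3 (Finset.mem_Icc.2 ⟨Nat.le_add_left 1 m, le_rfl⟩)
      simp at this
  · simp [restrictFacet, hV]

/-- Two PUSOs with the same restriction to a facet and the same image parity coincide. -/
lemma eq_of_restrictFacet_eq {φ φ' : Finset ℕ → Finset ℕ} {m : ℕ}
    (hφ : φ ∈ PUSOOutmaps (m + 1)) (hφ' : φ' ∈ PUSOOutmaps (m + 1))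
    (hr : restrictFacet m φ = restrictFacet m φ')
    (h0 : InImage φ (Finset.Icc 1 (m + 1)) ∅ ↔ InImage φ' (Finset.Icc 1 (m + 1)) ∅) :
    φ = φ' := by
  obtain ⟨N, Z, P⟩ := hφ
  obtain ⟨N', Z', P'⟩ := hφ'
  have hm : m + 1 ∈ Finset.Icc 1 (m + 1) := by simp
  have hIcc : ∀ j, j ∈ Finset.Icc 1 (m + 1) ↔ j ∈ Finset.Icc 1 m ∨ j = m + 1 := by
    intro j; simp only [Finset.mem_Icc]; omega
  have lower : ∀ V, V ⊆ Finset.Icc 1 m → φ V = φ' V := by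
    intro V hV
    have hVS := hV.trans (Icc_subset_succ m)
    have hrV := congrFun hr V
    simp only [restrictFacet, hV, if_true] at hrV
    have off : ∀ j, j ≠ m + 1 → (j ∈ φ V ↔ j ∈ φ' V) := by
      intro j hj
      have h1 := Finset.ext_iff.1 hrV j
      have h2 := @N V hVS j
      have h3 := @N' V hVS j
      have h4 := hIcc j
      simp only [Finset.mem_inter] at h1
      tauto
    -- Otherwise the values differ exactly in coordinate `m + 1`, hence in parity.
    by_contra hne
    have heq : φ V = φ' V ∆ {m + 1} := by
      have hat : ¬ (m + 1 ∈ φ V ↔ m + 1 ∈ φ' V) := by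
        intro hc
        apply hne
        ext j
        by_cases hj : j = m + 1
        · subst hj; exact hc
        · exact off j hj
      ext j
      simp only [Finset.mem_symmDiff, Finset.mem_singleton]
      by_cases hj : j = m + 1
      · subst hj; tauto
      · have := off j hj
        tauto
    have i1 : InImage φ (Finset.Icc 1 (m + 1)) (φ' V ∆ {m + 1}) := ⟨V, hVS, heq⟩
    have i2 : InImage φ' (Finset.Icc 1 (m + 1)) (φ' V) := ⟨V, hVS, rfl⟩
    rw [P.im_iff_not_im N hm (N' V hVS), P.im_iff N (N' V hVS), h0,
      ← P'.im_iff N' (N' V hVS)] at i1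
    exact i1 i2
  funext V
  by_cases hV : V ⊆ Finset.Icc 1 (m + 1)
  · by_cases hmV : m + 1 ∈ V
    · rw [← P.antipode N hV, ← P'.antipode N' hV]
      apply lower
      intro j hj
      rw [Finset.mem_sdiff, hIcc] at hj
      rcases hj with ⟨h | rfl, h2⟩
      · exact h
      · exact absurd hmV h2
    · apply lower
      intro j hj
      rcases (hIcc j).1 (hV hj) with h | rfl
      · exact h
      · exact absurd hj hmV
  · rw [Z V hV, Z' V hV]

/-- Every border USO extends to normalized PUSOs of both image parities. -/
lemma exists_extension {ψ : Finset ℕ → Finset ℕ} {m : ℕ} (hψ : ψ ∈ BorderOutmaps m) (b : Prop) :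
    ∃ φ ∈ PUSOOutmaps (m + 1), restrictFacet m φ = ψ ∧
      (InImage φ (Finset.Icc 1 (m + 1)) ∅ ↔ b) := by
  obtain ⟨_, Z, _, φ, hP, hr⟩ := hψ
  have hm : m + 1 ∈ Finset.Icc 1 (m + 1) := by simp
  have hsub := Icc_subset_succ m
  have hrest : ∀ χ : Finset ℕ → Finset ℕ,
      (∀ V, V ⊆ Finset.Icc 1 m → χ V ∩ Finset.Icc 1 m = φ V ∩ Finset.Icc 1 m) →
      restrictFacet m (normalizeOn (Finset.Icc 1 (m + 1)) χ) = ψ := by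
    intro χ hχ
    funext V
    by_cases hV : V ⊆ Finset.Icc 1 m
    · rw [← hr V hV, ← hχ V hV]
      simp only [restrictFacet, normalizeOn, hV, hV.trans hsub, if_true]
      rw [Finset.inter_assoc, Finset.inter_eq_right.2 hsub]
    · rw [Z V hV]
      simp [restrictFacet, hV]
  have hφ₁ := normalizeOn_mem hP
  have hφ₂ := normalizeOn_mem (hP.flip_singleton hm)
  -- The flipped PUSO attains `∅` exactly where the original attains `{m + 1}`.
  have himage : InImage (normalizeOn (Finset.Icc 1 (m + 1)) fun V => φ V ∆ {m + 1})
      (Finset.Icc 1 (m + 1)) ∅ ↔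
      InImage (normalizeOn (Finset.Icc 1 (m + 1)) φ) (Finset.Icc 1 (m + 1)) (∅ ∆ {m + 1}) := by
    unfold InImage
    refine exists_congr fun V => and_congr_right fun hV => ?_
    simp only [normalizeOn, hV, if_true, Finset.ext_iff]
    refine forall_congr' fun j => ?_
    simp only [Finset.mem_inter, Finset.mem_symmDiff, Finset.mem_singleton, Finset.notMem_empty]
    by_cases hj : j = m + 1
    · subst hj; tauto
    · tauto
  rw [hφ₁.2.2.im_iff_not_im hφ₁.1 hm (Finset.empty_subset _)] at himage
  by_cases hb : InImage (normalizeOn (Finset.Icc 1 (m + 1)) φ) (Finset.Icc 1 (m + 1)) ∅ ↔ b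
  · exact ⟨_, hφ₁, hrest φ fun _ _ => rfl, hb⟩
  · refine ⟨_, hφ₂, hrest _ fun V hV => ?_, by tauto⟩
    ext j
    simp only [Finset.mem_inter, Finset.mem_symmDiff, Finset.mem_singleton, Finset.mem_Icc]
    by_cases hj : j = m + 1
    · subst hj; simp
    · tauto

/-- `puso(n) = 2 · border(n-1)` for all `n ≥ 2`. -/
theorem puso_eq_two_mul_border (n : ℕ) (hn : 2 ≤ n) :
    pusoCount n = 2 * borderCount (n - 1) := by
  classical
  obtain ⟨m, rfl⟩ : ∃ m, n = m + 1 := ⟨n - 1, by omega⟩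
  rw [Nat.add_sub_cancel]
  let f : PUSOOutmaps (m + 1) → Bool × BorderOutmaps m := fun φ =>
    (decide (InImage φ.1 (Finset.Icc 1 (m + 1)) ∅), ⟨restrictFacet m φ.1, restrictFacet_mem φ.2⟩)
  have hf : Function.Bijective f := by
    constructor
    · intro φ φ' h
      simp only [f, Prod.mk.injEq, Subtype.mk.injEq, decide_eq_decide] at h
      exact Subtype.ext (eq_of_restrictFacet_eq φ.2 φ'.2 h.2 h.1)
    · rintro ⟨b, ψ, hψ⟩
      obtain ⟨φ, hφ, h1, h2⟩ := exists_extension hψ (b = true)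
      refine ⟨⟨φ, hφ⟩, ?_⟩
      simp only [f, Prod.mk.injEq, Subtype.mk.injEq]
      exact ⟨by simp [h2], h1⟩
  have hcard := Nat.card_eq_of_bijective f hf
  rw [Nat.card_prod, Nat.card_eq_fintype_card (α := Bool), Fintype.card_bool] at hcard
  exact hcard
end

section
/- Let φ be a bijective outmap (a bijection from subsets of {1,…,n} to subsets of {1,…,n}) that is a USO of the full face [∅,{1,…,n}] of the standard n-cube. Then the inverse map φ⁻¹ is also a USO of the full face [∅,{1,…,n}] of the standard n-cube. -/
/-!
The proof goes through the Szabó–Welzl characterization of unique sink orientations: an outmap `φ`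
is a USO of a cube iff for distinct vertices `U`, `V` some coordinate in which `U` and `V` differ
is one in which `φ U` and `φ V` differ. This condition is symmetric in `V` and `φ V`, so for a
bijective `φ` it passes to the inverse.

`existsUnique_outmap_eq` is the core of the forward direction: in a USO the outmap restricted to a
face with carrier `C` takes every value `S ⊆ C` exactly once (induction on `S`). The separation
property `exists_separating` is this uniqueness in the face `[U ∩ V, U ∪ V]`. For the converse,
`hasUniqueSink_of_separating`, separation makes the restricted outmap of a face `[A, B]` injective
into the subsets of `B \ A`, hence surjective by counting, so `∅` is attained exactly once.
-/

open Finset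
open scoped symmDiff

/-- In a USO, the outmap of a face, restricted to the carrier of that face, attains every subset
of the carrier exactly once. For `insert i T`, the two facets in direction `i` each contain exactly
one vertex with outmap `T` relative to the facet; exactly one of these two has outmap `T` in the
whole face, so the other one has outmap `insert i T`. -/
theorem existsUnique_outmap_eq {φ : Finset ℕ → Finset ℕ} {N : Finset ℕ} (hφ : IsUSO φ ∅ N)
    (S : Finset ℕ) : ∀ A B : Finset ℕ, A ⊆ B → B ⊆ N → S ⊆ B \ A →
      ∃! V, A ⊆ V ∧ V ⊆ B ∧ φ V ∩ (B \ A) = S := by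
  induction S using Finset.induction_on with
  | empty => exact fun A B hAB hBN _ => hφ.2 A B (empty_subset _) hAB hBN
  | insert i T hiT ih =>
    intro A B hAB hBN hS
    have hi : i ∈ B \ A := hS (mem_insert_self i T)
    have hT : T ⊆ B \ A := (subset_insert i T).trans hS
    have hiB : i ∈ B := (mem_sdiff.1 hi).1
    have hiA : i ∉ A := (mem_sdiff.1 hi).2
    have hlow : B.erase i \ A = (B \ A).erase i := by ext x; simp; tauto
    have hupp : B \ insert i A = (B \ A).erase i := by ext x; simp; tauto
    have hTi : T ⊆ (B \ A).erase i := fun x hx =>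
      mem_erase.2 ⟨fun h => hiT (h ▸ hx), hT hx⟩
    obtain ⟨V₀, ⟨hA₀, hB₀, h₀⟩, u₀⟩ := ih A (B.erase i)
      (fun x hx => mem_erase.2 ⟨fun h => hiA (h ▸ hx), hAB hx⟩)
      ((erase_subset _ _).trans hBN) (hlow ▸ hTi)
    obtain ⟨V₁, ⟨hA₁, hB₁, h₁⟩, u₁⟩ := ih (insert i A) B
      (insert_subset hiB hAB) hBN (hupp ▸ hTi)
    obtain ⟨V, ⟨hAV, hBV, hV⟩, u⟩ := ih A B hAB hBN hT
    rw [hlow] at h₀ u₀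
    rw [hupp] at h₁ u₁
    have hi₀ : i ∉ V₀ := fun h => (mem_erase.1 (hB₀ h)).1 rfl
    have hi₁ : i ∈ V₁ := hA₁ (mem_insert_self i A)
    have hne : V₀ ≠ V₁ := fun h => hi₀ (h ▸ hi₁)
    have hB₀' : V₀ ⊆ B := hB₀.trans (erase_subset _ _)
    have hA₁' : A ⊆ V₁ := (subset_insert i A).trans hA₁
    have key : ∀ W, φ W ∩ (B \ A).erase i = T →
        (i ∈ φ W → φ W ∩ (B \ A) = insert i T) ∧ (i ∉ φ W → φ W ∩ (B \ A) = T) := by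
      intro W hW
      rw [inter_erase] at hW
      constructor
      · intro h
        rw [← hW, insert_erase (mem_inter.2 ⟨h, hi⟩)]
      · intro h
        rw [← hW, erase_eq_of_notMem fun h' => h (mem_inter.1 h').1]
    have key' : ∀ W, (φ W ∩ (B \ A) = insert i T ∨ φ W ∩ (B \ A) = T) →
        φ W ∩ (B \ A).erase i = T := by
      intro W hW
      rw [inter_erase]
      rcases hW with hW | hW <;> rw [hW]
      · exact erase_insert hiT
      · exact erase_eq_of_notMem hiT
    -- Every vertex of the face with outmap `T` or `insert i T` is one of `V₀`, `V₁`.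
    have hcases : ∀ W, A ⊆ W → W ⊆ B →
        (φ W ∩ (B \ A) = insert i T ∨ φ W ∩ (B \ A) = T) → W = V₀ ∨ W = V₁ := by
      intro W hAW hWB hW
      by_cases h : i ∈ W
      · exact Or.inr (u₁ W ⟨insert_subset h hAW, hWB, key' W hW⟩)
      · exact Or.inl (u₀ W ⟨hAW, subset_erase.2 ⟨hWB, h⟩, key' W hW⟩)
    have hTne : T ≠ insert i T := fun h => hiT (h ▸ mem_insert_self i T)
    rcases hcases V hAV hBV (Or.inr hV) with rfl | rfl
    · refine ⟨V₁, ⟨hA₁', hB₁, (key V₁ h₁).1 ?_⟩, ?_⟩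
      · by_contra h
        exact hne (u V₁ ⟨hA₁', hB₁, (key V₁ h₁).2 h⟩).symm
      · rintro W ⟨hAW, hWB, hW⟩
        rcases hcases W hAW hWB (Or.inl hW) with rfl | rfl
        · exact absurd (hV.symm.trans hW) hTne
        · rfl
    · refine ⟨V₀, ⟨hA₀, hB₀', (key V₀ h₀).1 ?_⟩, ?_⟩
      · by_contra h
        exact hne (u V₀ ⟨hA₀, hB₀', (key V₀ h₀).2 h⟩)
      · rintro W ⟨hAW, hWB, hW⟩
        rcases hcases W hAW hWB (Or.inl hW) with rfl | rfl
        · rfl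
        · exact absurd (hV.symm.trans hW) hTne

theorem exists_separating {φ : Finset ℕ → Finset ℕ} {N : Finset ℕ} (hφ : IsUSO φ ∅ N)
    {U V : Finset ℕ} (hU : U ⊆ N) (hV : V ⊆ N) (hUV : U ≠ V) :
    ∃ i, i ∈ U ∆ V ∧ i ∈ φ U ∆ φ V := by
  by_contra! h
  -- `(U ∪ V) \ (U ∩ V)` is `U ∆ V`, on which `φ U` and `φ V` agree.
  have heq : φ V ∩ ((U ∪ V) \ (U ∩ V)) = φ U ∩ ((U ∪ V) \ (U ∩ V)) := by
    ext x
    have := h x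
    simp only [mem_symmDiff, mem_inter, mem_sdiff, mem_union] at this ⊢
    tauto
  exact hUV ((existsUnique_outmap_eq hφ _ (U ∩ V) (U ∪ V)
    (inter_subset_left.trans subset_union_left) (union_subset hU hV) inter_subset_right).unique
    ⟨inter_subset_left, subset_union_left, rfl⟩ ⟨inter_subset_right, subset_union_right, heq⟩)

theorem hasUniqueSink_of_separating {ψ : Finset ℕ → Finset ℕ} {A B : Finset ℕ} (hAB : A ⊆ B)
    (h : ∀ U V, U ⊆ B → V ⊆ B → U ≠ V → ∃ i, i ∈ U ∆ V ∧ i ∈ ψ U ∆ ψ V) :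
    HasUniqueSink ψ A B := by
  have hinj : Set.InjOn (fun V => ψ V ∩ (B \ A)) (Finset.Icc A B) := by
    intro U hU V hV hUV
    rw [mem_coe, Finset.mem_Icc] at hU hV
    by_contra hne
    obtain ⟨i, hi, hi'⟩ := h U V hU.2 hV.2 hne
    have h1 := Finset.ext_iff.1 hUV i
    have h2 := @hU.1 i
    have h3 := @hU.2 i
    have h4 := @hV.1 i
    have h5 := @hV.2 i
    simp only [mem_symmDiff, mem_inter, mem_sdiff] at h1 hi hi'
    tauto
  have hsurj := Finset.surjOn_of_injOn_of_card_le (s := Finset.Icc A B)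
    (t := (B \ A).powerset) (fun V => ψ V ∩ (B \ A))
    (fun V _ => mem_coe.2 (mem_powerset.2 inter_subset_right)) hinj
    (by rw [card_powerset, Finset.card_Icc_finset hAB, card_sdiff_of_subset hAB])
  obtain ⟨V, hV, hV0⟩ := hsurj (mem_coe.2 (empty_mem_powerset _))
  have hV' := Finset.mem_Icc.1 (mem_coe.1 hV)
  refine ⟨V, ⟨hV'.1, hV'.2, hV0⟩, ?_⟩
  rintro W ⟨hAW, hWB, hW⟩
  exact hinj (mem_coe.2 (Finset.mem_Icc.2 ⟨hAW, hWB⟩)) hV (hW.trans hV0.symm)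

/-- Duality: if `φ` is a bijective outmap of the standard `n`-cube (with
two-sided inverse `φinv` on the subsets of `{1,…,n}`) that is a USO of the full
face, then the inverse map is also a USO of the full face. -/
theorem dual_uso (n : ℕ) (φ φinv : Finset ℕ → Finset ℕ)
    (hmap : ∀ V : Finset ℕ, V ⊆ Finset.Icc 1 n → φ V ⊆ Finset.Icc 1 n)
    (hmapinv : ∀ V : Finset ℕ, V ⊆ Finset.Icc 1 n → φinv V ⊆ Finset.Icc 1 n)
    (hleft : ∀ V : Finset ℕ, V ⊆ Finset.Icc 1 n → φinv (φ V) = V)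
    (hright : ∀ V : Finset ℕ, V ⊆ Finset.Icc 1 n → φ (φinv V) = V)
    (hφ : IsUSO φ ∅ (Finset.Icc 1 n)) :
    IsUSO φinv ∅ (Finset.Icc 1 n) := by
  refine ⟨empty_subset _, fun A B _ hAB hBN => hasUniqueSink_of_separating hAB ?_⟩
  intro U V hU hV hUV
  have hU' := hU.trans hBN
  have hV' := hV.trans hBN
  obtain ⟨i, hi, hi'⟩ := exists_separating hφ (hmapinv U hU') (hmapinv V hV')
    fun h => hUV (by rw [← hright U hU', h, hright V hV'])
  rw [hright U hU', hright V hV'] at hi'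
  exact ⟨i, hi', hi⟩
end

section
/- Let φ be an outmap that is an odd USO of the full face [∅,{1,…,n}] of the standard n-cube, and let F = [A,B] be any face of the standard n-cube. Then (i) φ is an odd USO of F, and (ii) if F has dimension 2, then the induced orientation on F is a bow: the unique sink S of F under φ (the vertex with φ(S) ∩ (B \ A) = ∅) and the unique source T of F (the vertex with B \ A ⊆ φ(T)) satisfy |S ∆ T| = 1. -/
/-!
Both defining conditions of an odd USO quantify over subfaces and pairs of vertices, so they pass
to every face. In a 2-face with carrier `C`, the outmaps of the sink `S` and the source `T` differ
on all of `C`, and `S ∆ T ⊆ C`; oddness then makes `|S ∆ T|` an odd number that is at most 2.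
-/

open Finset
open scoped symmDiff

/-- `φ` is an odd USO of the face `[A,B]`: it is a USO of `[A,B]` and for all
distinct vertices `U, V` of the face, `U ∆ V ⊆ φ U ∆ φ V` implies that
`|U ∆ V|` is odd. -/
def IsOddUSO (φ : Finset ℕ → Finset ℕ) (A B : Finset ℕ) : Prop :=
  IsUSO φ A B ∧
    ∀ U V : Finset ℕ, A ⊆ U → U ⊆ B → A ⊆ V → V ⊆ B → U ≠ V →
      U ∆ V ⊆ φ U ∆ φ V → Odd (U ∆ V).card

/-- Faces of odd USOs are odd USOs, and every 2-face of an odd USO is a bow: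
its sink and its source are at Hamming distance 1. -/
theorem odd_uso_faces (n : ℕ) (φ : Finset ℕ → Finset ℕ)
    (hφ : IsOddUSO φ ∅ (Finset.Icc 1 n))
    (A B : Finset ℕ) (hAB : A ⊆ B) (hB : B ⊆ Finset.Icc 1 n) :
    IsOddUSO φ A B ∧
      ((B \ A).card = 2 →
        ∀ S T : Finset ℕ, A ⊆ S → S ⊆ B → A ⊆ T → T ⊆ B →
          φ S ∩ (B \ A) = ∅ → B \ A ⊆ φ T → (S ∆ T).card = 1) := by
  obtain ⟨⟨-, huso⟩, hodd⟩ := hφ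
  have hface : IsOddUSO φ A B :=
    ⟨⟨hAB, fun A' B' _ h₁ h₂ => huso A' B' (empty_subset _) h₁ (h₂.trans hB)⟩,
      fun U V _ hU _ hV => hodd U V (empty_subset _) (hU.trans hB) (empty_subset _) (hV.trans hB)⟩
  refine ⟨hface, fun hcard S T hAS hSB hAT hTB hS hT => ?_⟩
  have hsub : S ∆ T ⊆ B \ A := by
    intro x hx
    rw [mem_symmDiff] at hx
    rw [mem_sdiff]
    rcases hx with ⟨h₁, h₂⟩ | ⟨h₁, h₂⟩
    · exact ⟨hSB h₁, fun h => h₂ (hAT h)⟩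
    · exact ⟨hTB h₁, fun h => h₂ (hAS h)⟩
  -- The outmaps of sink and source differ in every coordinate of the carrier.
  have hout : B \ A ⊆ φ S ∆ φ T := by
    intro x hx
    rw [mem_symmDiff]
    refine Or.inr ⟨hT hx, fun h => ?_⟩
    have hmem : x ∈ φ S ∩ (B \ A) := mem_inter.mpr ⟨h, hx⟩
    simp [hS] at hmem
  have hne : S ≠ T := by
    rintro rfl
    rw [inter_eq_right.mpr hT] at hS
    simp [hS] at hcard
  obtain ⟨k, hk⟩ := hface.2 S T hAS hSB hAT hTB hne (hsub.trans hout)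
  have hle := card_le_card hsub
  omega
end

section
/- Define the Klee–Minty outmap φ on the standard n-cube by φ(V) = { j ∈ {1,…,n} : |V ∩ {j, j+1, …, n}| is odd } for all V ⊆ {1,…,n}. Then φ is an odd USO of the full face [∅,{1,…,n}], and for every vertex W ⊆ {1,…,n} and every i ∈ {1,…,n}, φ(W) ∆ φ(W ∆ {i}) = {1,2,…,i}. -/
/-!
Write `φ` for the Klee–Minty outmap. Since the parity of a cardinality is additive under symmetric
difference, `φ (U ∆ V) = φ U ∆ φ V` (`kleeMinty_symmDiff`), so every claim about a pair `U, V`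
is a claim about `D = U ∆ V` alone.

* `φ {i} = {1,…,i}`, which gives the flip formula.
* For nonempty `D`, the largest element of `D` lies in `φ D`. Two distinct sinks of a face would
  therefore disagree in the outmap on a carrier coordinate, so sinks are unique. Existence comes
  from adding carrier coordinates in decreasing order (`exists_sink`).
* For nonempty `D`, the smallest element of `D` lies in `φ D` exactly when `|D|` is odd, so
  `D ⊆ φ D` forces `|D|` to be odd.
-/

open Finset
open scoped symmDiff

/-- The outmap of the Klee–Minty cube:
`φ(V) = {j ∈ {1,…,n} : |V ∩ {j,…,n}| is odd}`. -/
def kleeMinty (n : ℕ) : Finset ℕ → Finset ℕ :=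
  fun V => (Finset.Icc 1 n).filter fun j => Odd (V ∩ Finset.Icc j n).card

theorem mem_kleeMinty {n j : ℕ} {V : Finset ℕ} :
    j ∈ kleeMinty n V ↔ j ∈ Finset.Icc 1 n ∧ Odd (V ∩ Finset.Icc j n).card := by
  simp only [kleeMinty, Finset.mem_filter]

theorem odd_card_symmDiff (X Y : Finset ℕ) :
    Odd (X ∆ Y).card ↔ ¬ (Odd X.card ↔ Odd Y.card) := by
  have hX := Finset.card_sdiff_add_card_inter X Y
  have hY := Finset.card_sdiff_add_card_inter Y X
  have hD : (X ∆ Y).card = (X \ Y).card + (Y \ X).card :=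
    Finset.card_union_of_disjoint disjoint_sdiff_sdiff
  rw [Finset.inter_comm Y X] at hY
  rw [hD]
  simp only [Nat.odd_iff]
  omega

/-- The Klee–Minty outmap is linear over `𝔽₂`, with symmetric difference as addition. -/
theorem kleeMinty_symmDiff (n : ℕ) (U V : Finset ℕ) :
    kleeMinty n (U ∆ V) = kleeMinty n U ∆ kleeMinty n V := by
  ext j
  have h : (U ∆ V) ∩ Finset.Icc j n = (U ∩ Finset.Icc j n) ∆ (V ∩ Finset.Icc j n) :=
    inf_symmDiff_distrib_right U V (Finset.Icc j n)
  simp only [Finset.mem_symmDiff, mem_kleeMinty, h, odd_card_symmDiff]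
  tauto

theorem kleeMinty_singleton {n i : ℕ} (hi : i ∈ Finset.Icc 1 n) :
    kleeMinty n {i} = Finset.Icc 1 i := by
  ext j
  rw [Finset.mem_Icc] at hi
  rw [mem_kleeMinty]
  by_cases h : j ≤ i
  · have : ({i} : Finset ℕ) ∩ Finset.Icc j n = {i} := by
      simp [h, hi.2]
    rw [this]
    simp
    omega
  · have : ({i} : Finset ℕ) ∩ Finset.Icc j n = ∅ := by
      simp [h]
    rw [this]
    simp
    omega

theorem max'_mem_kleeMinty {n : ℕ} {D : Finset ℕ} (hD : D ⊆ Finset.Icc 1 n)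
    (hne : D.Nonempty) : D.max' hne ∈ kleeMinty n D := by
  have hm := D.max'_mem hne
  refine mem_kleeMinty.2 ⟨hD hm, ?_⟩
  have : D ∩ Finset.Icc (D.max' hne) n = {D.max' hne} := by
    ext x
    simp only [Finset.mem_inter, Finset.mem_Icc, Finset.mem_singleton]
    constructor
    · rintro ⟨hx, h, -⟩
      exact le_antisymm (D.le_max' x hx) h
    · rintro rfl
      exact ⟨hm, le_rfl, (Finset.mem_Icc.1 (hD hm)).2⟩
  simp [this]

theorem min'_mem_kleeMinty_iff {n : ℕ} {D : Finset ℕ} (hD : D ⊆ Finset.Icc 1 n)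
    (hne : D.Nonempty) : D.min' hne ∈ kleeMinty n D ↔ Odd D.card := by
  have hm := D.min'_mem hne
  have : D ∩ Finset.Icc (D.min' hne) n = D :=
    Finset.inter_eq_left.2 fun x hx =>
      Finset.mem_Icc.2 ⟨D.min'_le x hx, (Finset.mem_Icc.1 (hD hx)).2⟩
  rw [mem_kleeMinty, this]
  exact and_iff_right (hD hm)

/-- Existence of a sink in the face with bottom vertex `A` and carrier `S`. Carrier coordinates
are added in decreasing order: flipping a new smallest coordinate `a` toggles only `{1,…,a}` in
the outmap, so it corrects `a` without disturbing the larger coordinates. -/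
theorem exists_sink (n : ℕ) (A S : Finset ℕ) (hS : S ⊆ Finset.Icc 1 n) (hAS : Disjoint A S) :
    ∃ V, A ⊆ V ∧ V ⊆ A ∪ S ∧ ∀ j ∈ S, j ∉ kleeMinty n V := by
  induction S using Finset.induction_on_min with
  | empty => exact ⟨A, subset_rfl, by simp, by simp⟩
  | insert a s ha ih =>
    rw [Finset.insert_subset_iff] at hS
    rw [Finset.disjoint_insert_right] at hAS
    obtain ⟨V, hAV, hVs, hV⟩ := ih hS.2 hAS.2
    by_cases h : a ∈ kleeMinty n V
    · refine ⟨V ∆ {a}, ?_, ?_, ?_⟩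
      · intro x hx
        have : x ≠ a := fun e => hAS.1 (e ▸ hx)
        simp [Finset.mem_symmDiff, hAV hx, this]
      · intro x hx
        rw [Finset.mem_symmDiff, Finset.mem_singleton] at hx
        rw [Finset.union_insert, Finset.mem_insert]
        rcases hx with hx | hx
        · exact Or.inr (hVs hx.1)
        · exact Or.inl hx.1
      · intro j hj
        rw [kleeMinty_symmDiff, kleeMinty_singleton hS.1, Finset.mem_symmDiff, Finset.mem_Icc]
        rcases Finset.mem_insert.1 hj with rfl | hj
        · have := (Finset.mem_Icc.1 hS.1).1
          simp [h, this]
        · have h1 := ha j hj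
          have h2 := hV j hj
          simp [h2, h1]
    · refine ⟨V, hAV, hVs.trans ?_, ?_⟩
      · exact Finset.union_subset_union_right (Finset.subset_insert a s)
      · intro j hj
        rcases Finset.mem_insert.1 hj with rfl | hj
        · exact h
        · exact hV j hj

theorem hasUniqueSink_kleeMinty {n : ℕ} {A B : Finset ℕ} (hAB : A ⊆ B)
    (hB : B ⊆ Finset.Icc 1 n) : HasUniqueSink (kleeMinty n) A B := by
  obtain ⟨V, hAV, hVB, hV⟩ := exists_sink n A (B \ A) (Finset.sdiff_subset.trans hB)
    Finset.disjoint_sdiff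
  rw [Finset.union_sdiff_of_subset hAB] at hVB
  refine ⟨V, ⟨hAV, hVB, ?_⟩, ?_⟩
  · exact Finset.disjoint_iff_inter_eq_empty.1 (Finset.disjoint_right.2 hV)
  · rintro U ⟨hAU, hUB, hU⟩
    have hU := Finset.disjoint_right.1 (Finset.disjoint_iff_inter_eq_empty.2 hU)
    by_contra hne
    have hD : U ∆ V ⊆ B \ A := by
      intro x hx
      rw [Finset.mem_symmDiff] at hx
      rw [Finset.mem_sdiff]
      have h1 := @hAU x
      have h2 := @hUB x
      have h3 := @hAV x
      have h4 := @hVB x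
      tauto
    have hDne : (U ∆ V).Nonempty := Finset.symmDiff_nonempty.2 hne
    -- The largest coordinate where `U` and `V` differ is outgoing at exactly one of them.
    have hmax := max'_mem_kleeMinty ((hD.trans Finset.sdiff_subset).trans hB) hDne
    have hmem := hD ((U ∆ V).max'_mem hDne)
    rw [kleeMinty_symmDiff, Finset.mem_symmDiff] at hmax
    rcases hmax with h | h
    · exact hU hmem h.1
    · exact hV _ hmem h.1

/-- The Klee–Minty cube is an odd USO of the full face of the standard
`n`-cube, and `φ(W) ∆ φ(W ∆ {i}) = {1,…,i}` for every vertex `W` and every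
coordinate `i`. -/
theorem klee_minty_odd_uso (n : ℕ) :
    IsOddUSO (kleeMinty n) ∅ (Finset.Icc 1 n) ∧
      ∀ W : Finset ℕ, W ⊆ Finset.Icc 1 n → ∀ i ∈ Finset.Icc 1 n,
        kleeMinty n W ∆ kleeMinty n (W ∆ {i}) = Finset.Icc 1 i := by
  refine ⟨⟨⟨Finset.empty_subset _, fun A B _ hAB hB => hasUniqueSink_kleeMinty hAB hB⟩, ?_⟩, ?_⟩
  · intro U V _ hU _ hV hne hsub
    have hDne : (U ∆ V).Nonempty := Finset.symmDiff_nonempty.2 hne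
    have hD : U ∆ V ⊆ Finset.Icc 1 n := symmDiff_le_sup.trans (Finset.union_subset hU hV)
    rw [← kleeMinty_symmDiff] at hsub
    exact (min'_mem_kleeMinty_iff hD hDne).1 (hsub ((U ∆ V).min'_mem hDne))
  · intro W _ i hi
    rw [kleeMinty_symmDiff, symmDiff_symmDiff_cancel_left, kleeMinty_singleton hi]
end
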